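/- arXiv:1607.05462 — 12 statements merged into one kernel-verified Lean document; each statement's English description precedes it below -/
import Mathlib

section
/- Let m and r be positive integers with gcd(r, m) = 1 and set g = (r−1)(m−1)/2 (an integer, since r and m cannot both be even). For every integer t with t ≥ r·m, the set Ψ(t) = { (I, k) ∈ ℤ² : 0 ≤ I < m, r·I ≤ t − m·k, k ≥ 0 } is finite and its cardinality equals 1 − g + t. -/
/-!
For each `I` with `0 ≤ I < m` the fibre of `Ψ(t)` over `I` has `⌊(t - r I) / m⌋ + 1` elements, because
`t ≥ r m` makes `t - r I` nonnegative. Since `r` is invertible modulo `m`, the residues of `t - r I`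
modulo `m` run through `0, …, m - 1` exactly once (`sum_residues`), so the floors can be summed
exactly from `t - r I = m ⌊(t - r I) / m⌋ + ((t - r I) mod m)`.
-/

/-- The lattice point set `Ψ(t) = {(I, k) ∈ ℤ² : 0 ≤ I < m, r·I ≤ t − m·k, k ≥ 0}`. -/
def Psi (m r : ℕ) (t : ℤ) : Set (ℤ × ℤ) :=
  {p : ℤ × ℤ | 0 ≤ p.1 ∧ p.1 < (m : ℤ) ∧ (r : ℤ) * p.1 ≤ t - (m : ℤ) * p.2 ∧ 0 ≤ p.2}

/-- When `r` is coprime to `m`, the map `i ↦ (t - r i) mod m` permutes `{0, …, m - 1}`. -/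
lemma sum_residues (m r : ℕ) (hm : 0 < m) (hgcd : Nat.gcd r m = 1) (t : ℤ) :
    ∑ i ∈ Finset.range m, (t - (r : ℤ) * i) % m = ∑ i ∈ Finset.range m, (i : ℤ) := by
  have hm' : (0 : ℤ) < m := by exact_mod_cast hm
  set f : ℕ → ℕ := fun i => ((t - (r : ℤ) * i) % m).toNat with hf
  have hfc : ∀ i, (f i : ℤ) = (t - (r : ℤ) * i) % m := fun i =>
    Int.toNat_of_nonneg (Int.emod_nonneg _ hm'.ne')
  have hinj : Set.InjOn f (Finset.range m) := by
    intro a ha b hb hab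
    simp only [Finset.coe_range, Set.mem_Iio] at ha hb
    have h1 : (t - (r : ℤ) * a) % m = (t - (r : ℤ) * b) % m := by
      rw [← hfc, ← hfc, hab]
    have h2 : (m : ℤ) ∣ (r : ℤ) * ((b : ℤ) - a) := by
      have := Int.ModEq.dvd (Int.ModEq.symm h1)
      rwa [show t - (r : ℤ) * a - (t - r * b) = r * ((b : ℤ) - a) by ring] at this
    have hco : IsCoprime (m : ℤ) (r : ℤ) :=
      Nat.isCoprime_iff_coprime.2 (Nat.Coprime.symm hgcd)
    have h3 := hco.dvd_of_dvd_mul_left h2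
    have h4 : (b : ℤ) - a = 0 :=
      Int.eq_zero_of_abs_lt_dvd h3 (abs_lt.2 ⟨by omega, by omega⟩)
    omega
  have himg : (Finset.range m).image f = Finset.range m := by
    apply Finset.eq_of_subset_of_card_le
    · intro x hx
      obtain ⟨i, -, rfl⟩ := Finset.mem_image.1 hx
      have h := hfc i
      have h' := Int.emod_lt_of_pos (t - (r : ℤ) * i) hm'
      rw [Finset.mem_range]
      omega
    · rw [Finset.card_image_of_injOn hinj]
  conv_rhs => rw [← himg, Finset.sum_image hinj]
  exact Finset.sum_congr rfl fun i _ => (hfc i).symm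

theorem psi_card (m r : ℕ) (hm : 0 < m) (hr : 0 < r) (hgcd : Nat.gcd r m = 1)
    (g : ℤ) (hg : 2 * g = ((r : ℤ) - 1) * ((m : ℤ) - 1))
    (t : ℤ) (ht : (r : ℤ) * (m : ℤ) ≤ t) :
    (Psi m r t).Finite ∧ ((Psi m r t).ncard : ℤ) = 1 - g + t := by
  have hm' : (0 : ℤ) < m := by exact_mod_cast hm
  set q : ℕ → ℤ := fun i => (t - (r : ℤ) * i) / m with hq
  let S : Finset (Σ _ : ℕ, ℕ) := (Finset.range m).sigma fun i => Finset.range (q i + 1).toNat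
  let e : (Σ _ : ℕ, ℕ) → ℤ × ℤ := fun p => ((p.1 : ℤ), (p.2 : ℤ))
  have he : Function.Injective e := by
    rintro ⟨a, b⟩ ⟨c, d⟩ h
    simp only [e, Prod.mk.injEq, Nat.cast_inj] at h
    obtain ⟨rfl, rfl⟩ := h
    rfl
  have hPsi : Psi m r t = ↑(S.image e) := by
    ext ⟨x, y⟩
    simp only [Psi, Set.mem_ofPred_eq, Finset.coe_image, Set.mem_image, Finset.mem_coe, S,
      Finset.mem_sigma, Finset.mem_range, e, Prod.mk.injEq]
    constructor
    · rintro ⟨h0, h1, h2, h3⟩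
      lift x to ℕ using h0
      lift y to ℕ using h3
      have : (y : ℤ) ≤ q x := (Int.le_ediv_iff_mul_le hm').2 (by linarith)
      exact ⟨⟨x, y⟩, ⟨by simpa using h1, by dsimp only; omega⟩, rfl, rfl⟩
    · rintro ⟨⟨a, b⟩, ⟨h1, h2⟩, rfl, rfl⟩
      dsimp only at h1 h2 ⊢
      have h3 : (b : ℤ) ≤ q a := by omega
      have h4 := (Int.le_ediv_iff_mul_le hm').1 h3
      exact ⟨by omega, by omega, by linarith, by omega⟩
  refine ⟨hPsi ▸ Finset.finite_toSet _, ?_⟩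
  rw [hPsi, Set.ncard_coe_finset, Finset.card_image_of_injective _ he, Finset.card_sigma]
  simp only [Finset.card_range]
  push_cast
  have hcount : ∑ i ∈ Finset.range m, max (q i + 1) 0 = ∑ i ∈ Finset.range m, q i + m := by
    rw [show (m : ℤ) = ∑ i ∈ Finset.range m, (1 : ℤ) by simp, ← Finset.sum_add_distrib]
    refine Finset.sum_congr rfl fun i hi => ?_
    have hi' : (i : ℤ) ≤ m := by exact_mod_cast (Finset.mem_range.1 hi).le
    have : 0 ≤ q i := Int.ediv_nonneg (by nlinarith) hm'.le
    exact max_eq_left (by omega)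
  have hgauss : 2 * ∑ i ∈ Finset.range m, (i : ℤ) = m * ((m : ℤ) - 1) := by
    have h := Finset.sum_range_id_mul_two m
    zify [Nat.succ_le_of_lt hm] at h
    linarith
  have hdiv : (m : ℤ) * ∑ i ∈ Finset.range m, q i
      = m * t - r * ∑ i ∈ Finset.range m, (i : ℤ) - ∑ i ∈ Finset.range m, (i : ℤ) := by
    conv_rhs => rw [← sum_residues m r hm hgcd t]
    have h : ∀ i ∈ Finset.range m, (m : ℤ) * q i = t - r * i - (t - (r : ℤ) * i) % m :=
      fun i _ => by linarith [Int.mul_ediv_add_emod (t - (r : ℤ) * i) m]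
    rw [Finset.mul_sum, Finset.sum_congr rfl h, Finset.sum_sub_distrib, Finset.sum_sub_distrib,
      ← Finset.mul_sum, sum_residues m r hm hgcd t]
    simp
  have hfinal : (2 * (m : ℤ)) * (∑ i ∈ Finset.range m, q i + m) = (2 * m) * (1 - g + t) := by
    linear_combination 2 * hdiv - (r + 1 : ℤ) * hgauss + (m : ℤ) * hg
  have := mul_left_cancel₀ (by positivity) hfinal
  simpa [hcount] using this
end

section
/- Let m and r be positive integers with gcd(r, m) = 1 and r ≥ 2. For every integer t, the cardinality of Ω_{0,…,0,t} (all parameters s_1 = ⋯ = s_r = 0) equals the cardinality of Ψ(t) = { (I, k) ∈ ℤ² : 0 ≤ I < m, r·I ≤ t − m·k, k ≥ 0 }; that is, the two finite sets are in bijection. -/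
/-!
For `s = 0` and `μ ≠ 0` the constraint `0 ≤ i + m * j_μ < m` forces `j_μ = -⌊i / m⌋`, so a point
of `Ω` is determined by `i`. Writing `i = m * k + I` with `0 ≤ I < m`, all the `j_μ` equal `-k`,
the constraint `i ≥ 0` becomes `k ≥ 0`, and
`r * i + m * ∑ j_μ = r * (m * k + I) - m * (r - 1) * k = r * I + m * k`.
Hence `(I, k) ↦ (m * k + I, -k, …, -k)` is an injection with image of `Ψ(t)` equal to `Ω`.
-/

/-- The lattice point set `Ω_{s₁,…,s_r,t}`: tuples `(i, j₂, …, j_r) ∈ ℤ^r`, encoded as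
functions `v : Fin r → ℤ` with `v 0 = i` and `v μ = j_{μ+1}` for `μ ≠ 0`; the parameters
`s₁, …, s_r` are encoded as `s : Fin r → ℤ` with `s μ = s_{μ+1}`.  The conditions are
`i + s₁ ≥ 0`, `0 ≤ i + m·j_μ + s_μ < m` for `2 ≤ μ ≤ r`, and `r·i + m·(j₂ + ⋯ + j_r) ≤ t`. -/
def Omega (m r : ℕ) [NeZero r] (s : Fin r → ℤ) (t : ℤ) : Set (Fin r → ℤ) :=
  {v : Fin r → ℤ |
    0 ≤ v 0 + s 0 ∧
    (∀ μ : Fin r, μ ≠ 0 → 0 ≤ v 0 + (m : ℤ) * v μ + s μ ∧ v 0 + (m : ℤ) * v μ + s μ < (m : ℤ)) ∧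
    (r : ℤ) * v 0 + (m : ℤ) * ∑ μ ∈ Finset.univ.erase (0 : Fin r), v μ ≤ t}

/-- The parametrization `(I, k) ↦ (m * k + I, -k, …, -k)` of the points of `Ω_{0,…,0,t}`. -/
def omegaPoint (m r : ℕ) [NeZero r] (p : ℤ × ℤ) : Fin r → ℤ :=
  fun μ => if μ = 0 then (m : ℤ) * p.2 + p.1 else -p.2

/-- A coordinate other than the first, which exists as `r ≥ 2`, recovers `k`. -/
lemma omegaPoint_injective (m r : ℕ) [NeZero r] (hr : 2 ≤ r) :
    Function.Injective (omegaPoint m r) := by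
  rintro ⟨a, b⟩ ⟨c, d⟩ h
  have h0 := congrFun h 0
  have h1 := congrFun h ⟨1, hr⟩
  have hne : (⟨1, hr⟩ : Fin r) ≠ 0 := by
    intro h
    simpa using congrArg Fin.val h
  simp only [omegaPoint, if_true, if_neg hne, neg_inj] at h0 h1
  subst h1
  simpa using h0

lemma sum_erase_const_of_eq (r : ℕ) [NeZero r] (v : Fin r → ℤ) (k : ℤ)
    (hv : ∀ μ, μ ≠ 0 → v μ = -k) :
    ∑ μ ∈ Finset.univ.erase (0 : Fin r), v μ = -(((r : ℤ) - 1) * k) := by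
  rw [Finset.sum_congr rfl (fun μ hμ => hv μ (Finset.ne_of_mem_erase hμ)), Finset.sum_const,
    Finset.card_erase_of_mem (Finset.mem_univ _), Finset.card_univ, Fintype.card_fin,
    nsmul_eq_mul, Nat.cast_pred (Nat.pos_of_neZero r)]
  ring

lemma omega_zero_eq_image (m r : ℕ) [NeZero r] (hm : 0 < m) (t : ℤ) :
    Omega m r (fun _ => 0) t = omegaPoint m r '' Psi m r t := by
  have hm' : (0 : ℤ) < m := by exact_mod_cast hm
  ext v
  simp only [Omega, Psi, Set.mem_setOf_eq, Set.mem_image, add_zero]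
  constructor
  · rintro ⟨h0, hj, ht⟩
    have hdm := Int.mul_ediv_add_emod (v 0) m
    have hv : ∀ μ, μ ≠ 0 → v μ = -(v 0 / m) := by
      intro μ hμ
      obtain ⟨h1, h2⟩ := hj μ hμ
      have h := Int.ediv_eq_zero_of_lt h1 h2
      rw [Int.add_mul_ediv_left _ _ hm'.ne'] at h
      linarith
    rw [sum_erase_const_of_eq r v _ hv] at ht
    refine ⟨(v 0 % m, v 0 / m), ⟨Int.emod_nonneg _ hm'.ne', Int.emod_lt_of_pos _ hm', ?_,
      Int.ediv_nonneg h0 hm'.le⟩, ?_⟩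
    · dsimp only
      linear_combination ht + (r : ℤ) * hdm
    · funext μ
      by_cases hμ : μ = 0
      · simp [omegaPoint, hμ, hdm]
      · simp [omegaPoint, hμ, hv μ hμ]
  · rintro ⟨⟨I, k⟩, ⟨hI, hIm, ht, hk⟩, rfl⟩
    have hs := sum_erase_const_of_eq r (omegaPoint m r (I, k)) k
      (fun μ hμ => by simp [omegaPoint, hμ])
    have h0 : omegaPoint m r (I, k) 0 = (m : ℤ) * k + I := by simp [omegaPoint]
    dsimp only at hI hIm ht hk
    rw [hs, h0]
    refine ⟨by positivity, fun μ hμ => ?_, by linear_combination ht⟩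
    have h1 : omegaPoint m r (I, k) μ = -k := by simp [omegaPoint, hμ]
    rw [h1]
    constructor <;> linarith

lemma psi_finite (m r : ℕ) (hm : 0 < m) (t : ℤ) : (Psi m r t).Finite := by
  refine ((Set.finite_Icc (0 : ℤ) m).prod (Set.finite_Icc (0 : ℤ) t)).subset ?_
  rintro ⟨I, k⟩ ⟨hI, hIm, ht, hk⟩
  dsimp only at hI hIm ht hk
  have hm' : (1 : ℤ) ≤ m := by exact_mod_cast hm
  have h1 : 0 ≤ (r : ℤ) * I := by positivity
  exact ⟨⟨hI, hIm.le⟩, hk, by nlinarith⟩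

theorem omega_zero_card_eq_psi_card (m r : ℕ) [NeZero r] (hm : 0 < m) (hr : 2 ≤ r)
    (hgcd : Nat.gcd r m = 1) (t : ℤ) :
    (Omega m r (fun _ => 0) t).Finite ∧ (Psi m r t).Finite ∧
      (Omega m r (fun _ => 0) t).ncard = (Psi m r t).ncard := by
  have hfin := psi_finite m r hm t
  rw [omega_zero_eq_image m r hm t]
  exact ⟨hfin.image _, hfin, Set.ncard_image_of_injective _ (omegaPoint_injective m r hr)⟩
end

section
/- Let m and r be positive integers with r ≥ 2, let s_1 and s_μ (for 3 ≤ μ ≤ r) be integers with 1 ≤ s_1 ≤ m and 1 ≤ s_μ ≤ m, and let t be an integer with t ≥ r·(m−1) − m. Then the set of tuples (I, J_3, …, J_r) ∈ ℤ^{r−2+1} satisfying m − s_1 ≤ I < m, J_μ = ⌈(−I − s_μ)/m⌉ for each μ with 3 ≤ μ ≤ r, and r·I + m·(J_3 + ⋯ + J_r) ≤ t + m, has cardinality exactly s_1. -/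
/-!
A tuple in `Ψ₁` is determined by its first coordinate `I`, and the last inequality is automatic:
`0 ≤ m - s₁ ≤ I ≤ m - 1` makes every `J_μ` nonpositive, so that
`r·I + m·∑ J_μ ≤ r·(m - 1) ≤ t + m`. Hence `Ψ₁` is the injective image of the integer interval
`[m - s₁, m)`, which has `s₁` elements.
-/

/-- The lattice point set `Ψ₁`: tuples `(I, J₃, …, J_r)`, encoded as pairs
`(I, J)` with `J : Fin (r-2) → ℤ` giving `J₃, …, J_r` (here `s : Fin (r-2) → ℤ` gives
`s₃, …, s_r`).  The conditions are `m − s₁ ≤ I < m`, `J_μ = ⌈(−I − s_μ)/m⌉`, and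
`r·I + m·(J₃ + ⋯ + J_r) ≤ t + m`. -/
def PsiOne (m r : ℕ) (s1 : ℤ) (s : Fin (r - 2) → ℤ) (t : ℤ) : Set (ℤ × (Fin (r - 2) → ℤ)) :=
  {p : ℤ × (Fin (r - 2) → ℤ) |
    (m : ℤ) - s1 ≤ p.1 ∧ p.1 < (m : ℤ) ∧
    (∀ μ : Fin (r - 2), p.2 μ = ⌈((-p.1 - s μ : ℤ) : ℚ) / (m : ℚ)⌉) ∧
    (r : ℤ) * p.1 + (m : ℤ) * ∑ μ : Fin (r - 2), p.2 μ ≤ t + (m : ℤ)}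

theorem psiOne_card (m r : ℕ) (hm : 0 < m) (hr : 2 ≤ r)
    (s1 : ℤ) (hs1 : 1 ≤ s1 ∧ s1 ≤ (m : ℤ))
    (s : Fin (r - 2) → ℤ) (hs : ∀ μ : Fin (r - 2), 1 ≤ s μ ∧ s μ ≤ (m : ℤ))
    (t : ℤ) (ht : (r : ℤ) * ((m : ℤ) - 1) - (m : ℤ) ≤ t) :
    (PsiOne m r s1 s t).Finite ∧ ((PsiOne m r s1 s t).ncard : ℤ) = s1 := by
  -- The map sending `I` to the tuple it determines.
  set f : ℤ → ℤ × (Fin (r - 2) → ℤ) :=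
    fun I => (I, fun μ => ⌈((-I - s μ : ℤ) : ℚ) / (m : ℚ)⌉) with hf
  have hinj : Function.Injective f := fun a b h => congrArg Prod.fst h
  have himage : PsiOne m r s1 s t = Set.image f (Set.Ico ((m : ℤ) - s1) m) := by
    ext ⟨I, J⟩
    simp only [PsiOne, Set.mem_ofPred_eq, Set.mem_image, Set.mem_Ico, hf, Prod.mk.injEq]
    constructor
    · rintro ⟨h1, h2, h3, -⟩
      exact ⟨I, ⟨h1, h2⟩, rfl, funext fun μ => (h3 μ).symm⟩
    · rintro ⟨K, ⟨h1, h2⟩, rfl, rfl⟩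
      refine ⟨h1, h2, fun μ => rfl, ?_⟩
      -- `K ≥ m - s1 ≥ 0`, so the ceilings are of nonpositive numbers.
      have hsum : ∑ μ : Fin (r - 2), ⌈((-K - s μ : ℤ) : ℚ) / (m : ℚ)⌉ ≤ 0 := by
        refine Finset.sum_nonpos fun μ _ => Int.ceil_le.mpr ?_
        have hneg : -K - s μ ≤ 0 := by linarith [(hs μ).1, hs1.2]
        rw [Int.cast_zero]
        exact div_nonpos_of_nonpos_of_nonneg (by exact_mod_cast hneg) (Nat.cast_nonneg m)
      have hmsum := mul_nonpos_of_nonneg_of_nonpos (Int.natCast_nonneg m) hsum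
      have hrI : (r : ℤ) * K ≤ (r : ℤ) * ((m : ℤ) - 1) :=
        mul_le_mul_of_nonneg_left (by omega) (Int.natCast_nonneg r)
      linarith
  rw [himage]
  refine ⟨(Set.finite_Ico _ _).image f, ?_⟩
  rw [Set.ncard_image_of_injective _ hinj, ← Finset.coe_Ico, Set.ncard_coe_finset, Int.card_Ico]
  omega
end

section
/- Let m and r be positive integers with gcd(r, m) = 1, r ≥ 2, and set g = (r−1)(m−1)/2. Let s_1, s_3, s_4, …, s_r be integers with 1 ≤ s_i ≤ m for each i ∈ {1, 3, 4, …, r}, set s_2 = 0, and let t be an integer with t ≥ r·m. Then the cardinality of Ω_{s_1, 0, s_3, …, s_r, t} equals 1 − g + t + s_1 + s_3 + s_4 + ⋯ + s_r. -/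
/-- Remainders of a complete residue system modulo `m` sum to `0 + 1 + ⋯ + (m - 1)`. -/
lemma sum_emod_eq (m : ℕ) (hm : 0 < m) (h : ℕ → ℤ)
    (hinj : ∀ a < m, ∀ b < m, (m : ℤ) ∣ h a - h b → a = b) :
    2 * ∑ c ∈ Finset.range m, h c % (m : ℤ) = (m : ℤ) * ((m : ℤ) - 1) := by
  have hm' : (0 : ℤ) < m := by exact_mod_cast hm
  have hnn : ∀ c, 0 ≤ h c % (m : ℤ) := fun c => Int.emod_nonneg _ hm'.ne'
  have hlt : ∀ c, h c % (m : ℤ) < m := fun c => Int.emod_lt_of_pos _ hm'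
  have hio : Set.InjOn (fun c => (h c % (m : ℤ)).toNat) (Finset.range m : Set ℕ) := by
    intro a ha b hb hab
    simp only [Finset.coe_range, Set.mem_Iio] at ha hb
    refine hinj a ha b hb ?_
    have h1 := hnn a
    have h2 := hnn b
    have h3 : h a % (m : ℤ) = h b % (m : ℤ) := by
      simp only at hab
      omega
    exact Int.ModEq.dvd h3.symm
  have himg : (Finset.range m).image (fun c => (h c % (m : ℤ)).toNat) = Finset.range m := by
    apply Finset.eq_of_subset_of_card_le
    · intro x hx
      obtain ⟨c, -, rfl⟩ := Finset.mem_image.1 hx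
      have h1 := hnn c
      have h2 := hlt c
      rw [Finset.mem_range]
      omega
    · rw [Finset.card_image_of_injOn hio]
  have hsum : ∑ c ∈ Finset.range m, h c % (m : ℤ) = ∑ c ∈ Finset.range m, (c : ℤ) := by
    conv_rhs => rw [← himg]
    rw [Finset.sum_image hio]
    exact Finset.sum_congr rfl fun c _ => (Int.toNat_of_nonneg (hnn c)).symm
  have hg := Finset.sum_range_id_mul_two m
  rw [hsum]
  obtain ⟨k, rfl⟩ : ∃ k, m = k + 1 := ⟨m - 1, by omega⟩
  have hg' : (((∑ i ∈ Finset.range (k + 1), i) * 2 : ℕ) : ℤ) = ((k + 1) * (k + 1 - 1) : ℕ) := by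
    rw [hg]
  push_cast at hg' ⊢
  linarith

/-- Counting a sublevel set residue class by residue class. The bound `hb` makes every summand
nonnegative. -/
lemma ncard_sublevel (m : ℕ) (hm : 0 < m) (f : ℕ → ℤ) (hf : ∀ n, f (n + m) = f n + m) (t : ℤ)
    (hb : ∀ c < m, f c ≤ t + m) :
    (({n : ℕ | f n ≤ t}).ncard : ℤ) = ∑ c ∈ Finset.range m, ((t - f c) / (m : ℤ) + 1) := by
  have hm' : (0 : ℤ) < m := by exact_mod_cast hm
  have hfk : ∀ c k, f (c + m * k) = f c + m * k := by
    intro c k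
    induction k with
    | zero => simp
    | succ k ih =>
      rw [Nat.mul_succ, ← Nat.add_assoc, hf, ih]
      push_cast
      ring
  have hnn : ∀ c < m, 0 ≤ (t - f c) / (m : ℤ) + 1 := by
    intro c hc
    have : -1 ≤ (t - f c) / (m : ℤ) := by
      rw [Int.le_ediv_iff_mul_le hm']
      linarith [hb c hc]
    linarith
  let T : Finset (Σ _ : ℕ, ℕ) :=
    (Finset.range m).sigma fun c => Finset.range ((t - f c) / (m : ℤ) + 1).toNat
  have hset : {n : ℕ | f n ≤ t} = ((T.image fun p => p.1 + m * p.2 : Finset ℕ) : Set ℕ) := by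
    ext n
    simp only [Set.mem_ofPred_eq, Finset.coe_image, Set.mem_image, Finset.mem_coe]
    have key : ∀ c k, f (c + m * k) ≤ t ↔ k < ((t - f c) / (m : ℤ) + 1).toNat := by
      intro c k
      rw [hfk, Int.lt_toNat, Int.lt_add_one_iff, Int.le_ediv_iff_mul_le hm', mul_comm]
      constructor <;> intro h <;> linarith
    constructor
    · intro h
      refine ⟨⟨n % m, n / m⟩, ?_, Nat.mod_add_div n m⟩
      simp only [T, Finset.mem_sigma, Finset.mem_range]
      refine ⟨Nat.mod_lt _ hm, (key _ _).1 ?_⟩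
      rwa [Nat.mod_add_div]
    · rintro ⟨⟨c, k⟩, hp, rfl⟩
      simp only [T, Finset.mem_sigma, Finset.mem_range] at hp
      exact (key c k).2 hp.2
  have hinj : Set.InjOn (fun p : (Σ _ : ℕ, ℕ) => p.1 + m * p.2) (T : Set (Σ _ : ℕ, ℕ)) := by
    rintro ⟨c, k⟩ hp ⟨c', k'⟩ hp' h
    simp only [T, Finset.mem_coe, Finset.mem_sigma, Finset.mem_range] at hp hp' h
    have h1 : c = c' := by
      have := congrArg (· % m) h
      simpa [Nat.add_mul_mod_self_left, Nat.mod_eq_of_lt hp.1, Nat.mod_eq_of_lt hp'.1] using this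
    subst h1
    have h2 : k = k' := Nat.eq_of_mul_eq_mul_left hm (by omega)
    rw [h2]
  rw [hset, Set.ncard_coe_finset, Finset.card_image_of_injOn hinj, Finset.card_sigma]
  push_cast
  refine Finset.sum_congr rfl fun c hc => ?_
  rw [Finset.card_range]
  exact Int.toNat_of_nonneg (hnn c (Finset.mem_range.1 hc))

/-- The value of `r·i + m·(j₂ + ⋯ + j_r)` at the unique candidate point with first coordinate
`i = n - s₁`. -/
def weight (m r : ℕ) [NeZero r] (s : Fin r → ℤ) (n : ℕ) : ℤ :=
  (r : ℤ) * (n - s 0) + m * ∑ μ ∈ Finset.univ.erase (0 : Fin r), -((n - s 0 + s μ) / (m : ℤ))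

lemma weight_eq (m r : ℕ) [NeZero r] (s : Fin r → ℤ) (n : ℕ) :
    weight m r s n = n - ∑ i, s i
      + ∑ μ ∈ Finset.univ.erase (0 : Fin r), (n - s 0 + s μ) % (m : ℤ) := by
  have h1 : ∑ μ ∈ Finset.univ.erase (0 : Fin r), (n - s 0 + s μ) % (m : ℤ)
      = ∑ μ ∈ Finset.univ.erase (0 : Fin r), ((n - s 0 : ℤ) + s μ)
        + m * ∑ μ ∈ Finset.univ.erase (0 : Fin r), -((n - s 0 + s μ) / (m : ℤ)) := by
    rw [Finset.mul_sum, ← Finset.sum_add_distrib]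
    refine Finset.sum_congr rfl fun μ _ => ?_
    rw [Int.emod_def]
    ring
  have h2 := Finset.add_sum_erase Finset.univ s (Finset.mem_univ (0 : Fin r))
  have hr : 0 < r := Nat.pos_of_ne_zero (NeZero.ne r)
  rw [h1, Finset.sum_add_distrib, Finset.sum_const, Finset.card_erase_of_mem (Finset.mem_univ _),
    Finset.card_univ, Fintype.card_fin, weight, ← h2, nsmul_eq_mul, Nat.cast_sub hr]
  push_cast
  ring

lemma weight_add (m r : ℕ) [NeZero r] (s : Fin r → ℤ) (n : ℕ) :
    weight m r s (n + m) = weight m r s n + m := by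
  rw [weight_eq, weight_eq]
  have h : ∀ μ, (((n + m : ℕ) : ℤ) - s 0 + s μ) % (m : ℤ) = (n - s 0 + s μ) % (m : ℤ) := by
    intro μ
    rw [← Int.add_emod_right (n - s 0 + s μ : ℤ) m]
    congr 1
    push_cast
    ring
  simp only [h]
  push_cast
  ring

/-- `Omega` is parametrised by its first coordinate, shifted so as to be a natural number. -/
lemma ncard_Omega (m r : ℕ) [NeZero r] (hm : 0 < m) (s : Fin r → ℤ) (t : ℤ) :
    (Omega m r s t).ncard = ({n : ℕ | weight m r s n ≤ t}).ncard := by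
  have hm' : (0 : ℤ) < m := by exact_mod_cast hm
  let φ : ℕ → Fin r → ℤ := fun n μ =>
    if μ = 0 then n - s 0 else -((n - s 0 + s μ) / (m : ℤ))
  have hφ0 : ∀ n, φ n 0 = n - s 0 := fun n => if_pos rfl
  have hφ : ∀ n μ, μ ≠ 0 → φ n μ = -((n - s 0 + s μ) / (m : ℤ)) := fun n μ h => if_neg h
  have hφinj : Function.Injective φ := by
    intro a b hab
    have := congrFun hab 0
    rw [hφ0, hφ0] at this
    omega
  have hw : ∀ n, (r : ℤ) * φ n 0 + (m : ℤ) * ∑ μ ∈ Finset.univ.erase (0 : Fin r), φ n μ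
      = weight m r s n := by
    intro n
    rw [weight, hφ0, Finset.sum_congr rfl fun μ hμ => hφ n μ (Finset.ne_of_mem_erase hμ)]
  have hset : Omega m r s t = φ '' {n : ℕ | weight m r s n ≤ t} := by
    ext v
    constructor
    · rintro ⟨h0, h1, h2⟩
      have hv : φ (v 0 + s 0).toNat = v := by
        have hn : (((v 0 + s 0).toNat : ℕ) : ℤ) = v 0 + s 0 := Int.toNat_of_nonneg h0
        funext μ
        by_cases hμ : μ = 0
        · subst hμ
          rw [hφ0, hn]
          ring
        · rw [hφ _ _ hμ, hn]
          obtain ⟨ha, hb⟩ := h1 μ hμ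
          have : (v 0 + s 0 - s 0 + s μ) / (m : ℤ) = -v μ := by
            rw [Int.ediv_eq_iff_of_pos hm']
            constructor <;> linarith
          rw [this, neg_neg]
      refine ⟨(v 0 + s 0).toNat, ?_, hv⟩
      rw [Set.mem_ofPred_eq, ← hw, hv]
      exact h2
    · rintro ⟨n, hn, rfl⟩
      refine ⟨?_, ?_, ?_⟩
      · rw [hφ0]
        omega
      · intro μ hμ
        have he : φ n 0 + (m : ℤ) * φ n μ + s μ = (n - s 0 + s μ) % (m : ℤ) := by
          rw [hφ0, hφ n μ hμ, Int.emod_def]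
          ring
        rw [he]
        exact ⟨Int.emod_nonneg _ hm'.ne', Int.emod_lt_of_pos _ hm'⟩
      · rw [hw]
        exact hn
  rw [hset, Set.ncard_image_of_injective _ hφinj]

theorem omega_card_s2_zero (m r : ℕ) [NeZero r] (hm : 0 < m) (hr : 2 ≤ r)
    (hgcd : Nat.gcd r m = 1)
    (g : ℤ) (hg : 2 * g = ((r : ℤ) - 1) * ((m : ℤ) - 1))
    (s : Fin r → ℤ) (hs2 : s 1 = 0)
    (hs : ∀ i : Fin r, i ≠ 1 → 1 ≤ s i ∧ s i ≤ (m : ℤ))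
    (t : ℤ) (ht : (r : ℤ) * (m : ℤ) ≤ t) :
    ((Omega m r s t).ncard : ℤ) = 1 - g + t + ∑ i : Fin r, s i := by
  have hm' : (0 : ℤ) < m := by exact_mod_cast hm
  have hr' : (2 : ℤ) ≤ r := by exact_mod_cast hr
  have hS : 0 ≤ ∑ i, s i := by
    refine Finset.sum_nonneg fun i _ => ?_
    by_cases hi : i = 1
    · rw [hi, hs2]
    · linarith [(hs i hi).1]
  have hcard : (((Finset.univ.erase (0 : Fin r)).card : ℕ) : ℤ) = r - 1 := by
    rw [Finset.card_erase_of_mem (Finset.mem_univ _), Finset.card_univ, Fintype.card_fin,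
      Nat.cast_sub (by omega)]
    simp
  have hlt_inj : ∀ a < m, ∀ b < m, (m : ℤ) ∣ (a : ℤ) - b → a = b := by
    intro a ha b hb hab
    have h1 : b ≡ a [MOD m] := (Nat.modEq_iff_dvd).2 hab
    exact (Nat.ModEq.eq_of_lt_of_lt h1 hb ha).symm
  have hbound : ∀ c < m, weight m r s c ≤ t + m := by
    intro c hc
    have h1 : ∑ μ ∈ Finset.univ.erase (0 : Fin r), (c - s 0 + s μ) % (m : ℤ)
        ≤ ((r : ℤ) - 1) * m := by
      have := Finset.sum_le_card_nsmul (Finset.univ.erase (0 : Fin r))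
        (fun μ => (c - s 0 + s μ) % (m : ℤ)) m fun μ _ => (Int.emod_lt_of_pos _ hm').le
      rwa [nsmul_eq_mul, hcard] at this
    have h2 : (c : ℤ) < m := by exact_mod_cast hc
    rw [weight_eq]
    linarith
  rw [ncard_Omega m r hm, ncard_sublevel m hm _ (weight_add m r s) t hbound]
  set f := weight m r s with hf
  -- The remainders of `t - f c` form a complete residue system, since `f c ≡ r (c - s₁)`.
  have hrem : 2 * ∑ c ∈ Finset.range m, (t - f c) % (m : ℤ) = (m : ℤ) * ((m : ℤ) - 1) := by
    refine sum_emod_eq m hm (fun c => t - f c) fun a ha b hb hab => ?_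
    have h1 : (m : ℤ) ∣ (r : ℤ) * (b - a) := by
      have h2 : (r : ℤ) * (b - a) = ((t - f a) - (t - f b))
          + m * (∑ μ ∈ Finset.univ.erase (0 : Fin r), -((a - s 0 + s μ) / (m : ℤ))
            - ∑ μ ∈ Finset.univ.erase (0 : Fin r), -((b - s 0 + s μ) / (m : ℤ))) := by
        rw [hf, weight, weight]
        ring
      rw [h2]
      exact dvd_add hab (dvd_mul_right _ _)
    have hcop : IsCoprime (m : ℤ) (r : ℤ) :=
      Nat.isCoprime_iff_coprime.2 (Nat.Coprime.symm hgcd)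
    exact (hlt_inj b hb a ha (hcop.dvd_of_dvd_mul_left h1)).symm
  have hfsum : 2 * ∑ c ∈ Finset.range m, f c
      = (r : ℤ) * (m * (m - 1)) - 2 * m * ∑ i, s i := by
    have hid : 2 * ∑ c ∈ Finset.range m, (c : ℤ) = (m : ℤ) * ((m : ℤ) - 1) := by
      rw [← sum_emod_eq m hm (fun c => (c : ℤ)) hlt_inj]
      congr 1
      refine Finset.sum_congr rfl fun c hc => (Int.emod_eq_of_lt (by positivity) ?_).symm
      exact_mod_cast Finset.mem_range.1 hc
    have hin : ∀ μ, 2 * ∑ c ∈ Finset.range m, ((c : ℤ) - s 0 + s μ) % (m : ℤ)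
        = (m : ℤ) * ((m : ℤ) - 1) := by
      intro μ
      refine sum_emod_eq m hm (fun c => (c : ℤ) - s 0 + s μ) fun a ha b hb hab => ?_
      refine hlt_inj a ha b hb ?_
      convert hab using 1
      ring
    have hdbl : 2 * ∑ c ∈ Finset.range m, ∑ μ ∈ Finset.univ.erase (0 : Fin r),
        ((c : ℤ) - s 0 + s μ) % (m : ℤ) = ((r : ℤ) - 1) * (m * (m - 1)) := by
      rw [Finset.sum_comm, Finset.mul_sum, Finset.sum_congr rfl fun μ _ => hin μ,
        Finset.sum_const, nsmul_eq_mul, hcard]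
    simp only [hf, weight_eq]
    rw [Finset.sum_add_distrib, Finset.sum_sub_distrib, Finset.sum_const, Finset.card_range,
      nsmul_eq_mul]
    linarith
  have hdiv : (m : ℤ) * ∑ c ∈ Finset.range m, ((t - f c) / (m : ℤ) + 1)
      = m * t - ∑ c ∈ Finset.range m, f c - ∑ c ∈ Finset.range m, (t - f c) % (m : ℤ) + m * m := by
    have h1 : ∀ c, (m : ℤ) * ((t - f c) / (m : ℤ) + 1) = t - f c - (t - f c) % (m : ℤ) + m := by
      intro c
      rw [Int.emod_def]
      ring
    rw [Finset.mul_sum, Finset.sum_congr rfl fun c _ => h1 c, Finset.sum_add_distrib,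
      Finset.sum_sub_distrib, Finset.sum_sub_distrib, Finset.sum_const, Finset.sum_const,
      Finset.card_range, nsmul_eq_mul, nsmul_eq_mul]
  have h2m : (2 * (m : ℤ)) ≠ 0 := by positivity
  apply mul_left_cancel₀ h2m
  linear_combination 2 * hdiv - hfsum - hrem + (m : ℤ) * hg
end

section
/- Let m and r be positive integers with gcd(r, m) = 1, r ≥ 2, and set g = (r−1)(m−1)/2. Let s_1, …, s_r, t be integers with s_1 + s_2 + ⋯ + s_r + t ≥ (2r−1)·m. Then the cardinality of Ω_{s_1,…,s_r,t} equals 1 − g + s_1 + s_2 + ⋯ + s_r + t. -/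
/-- For `u` coprime to `m`, the affine map `a ↦ u a + c` permutes the residues mod `m`. -/
lemma sum_affine_emod (m : ℕ) (hm : 0 < m) (u c : ℤ) (hu : IsCoprime (m : ℤ) u) :
    2 * ∑ a ∈ Finset.range m, (u * (a : ℤ) + c) % (m : ℤ) = (m : ℤ) * ((m : ℤ) - 1) := by
  have hm' : (0 : ℤ) < m := by exact_mod_cast hm
  have hnn : ∀ a : ℕ, 0 ≤ (u * (a : ℤ) + c) % (m : ℤ) := fun a => Int.emod_nonneg _ hm'.ne'
  have hlt : ∀ a : ℕ, (u * (a : ℤ) + c) % (m : ℤ) < m := fun a => Int.emod_lt_of_pos _ hm'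
  have hmaps : ∀ a ∈ Finset.range m,
      ((u * (a : ℤ) + c) % (m : ℤ)).toNat ∈ Finset.range m := by
    intro a _
    have h1 := hnn a
    have h2 := hlt a
    rw [Finset.mem_range]
    omega
  have hinj : Set.InjOn (fun a : ℕ => ((u * (a : ℤ) + c) % (m : ℤ)).toNat)
      (Finset.range m : Set ℕ) := by
    intro a ha b hb hab
    simp only [Finset.coe_range, Set.mem_Iio] at ha hb
    have h1 := hnn a
    have h2 := hnn b
    have hab' : (u * (a : ℤ) + c) % (m : ℤ) = (u * (b : ℤ) + c) % (m : ℤ) := by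
      simp only at hab
      omega
    have hd : (m : ℤ) ∣ u * ((a : ℤ) - b) := by
      have := Int.ModEq.dvd (n := (m : ℤ)) (show u * (b : ℤ) + c ≡ u * (a : ℤ) + c [ZMOD m] from
        hab'.symm)
      have e : u * ((a : ℤ) - b) = (u * (a : ℤ) + c) - (u * (b : ℤ) + c) := by ring
      rwa [e]
    have hd' := hu.dvd_of_dvd_mul_left hd
    have := Int.eq_zero_of_abs_lt_dvd hd' (by rw [abs_lt]; omega)
    omega
  have hsum : ∑ a ∈ Finset.range m, (u * (a : ℤ) + c) % (m : ℤ)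
      = ∑ a ∈ Finset.range m, (a : ℤ) := by
    refine Finset.sum_nbij (fun a : ℕ => ((u * (a : ℤ) + c) % (m : ℤ)).toNat) hmaps hinj
      (Finset.surjOn_of_injOn_of_card_le _ hmaps hinj le_rfl) ?_
    intro a _
    exact (Int.toNat_of_nonneg (hnn a)).symm
  have hgauss : ∀ k : ℕ, 2 * ∑ a ∈ Finset.range k, (a : ℤ) = (k : ℤ) * ((k : ℤ) - 1) := by
    intro k
    induction k with
    | zero => simp
    | succ k ih =>
      rw [Finset.sum_range_succ, mul_add, ih]
      push_cast
      ring
  rw [hsum, hgauss]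

/-- Each residue class mod `m` contributes `⌊(t - G a) / m⌋ + 1` elements, where `a` is its least
nonnegative representative. -/
lemma count_of_shift (m : ℕ) (hm : 0 < m) (G : ℤ → ℤ) (t : ℤ)
    (hG : ∀ n k : ℤ, G (n + m * k) = G n + m * k)
    (hle : ∀ a : ℕ, a < m → G a ≤ t) :
    {n : ℤ | 0 ≤ n ∧ G n ≤ t}.Finite ∧
      (({n : ℤ | 0 ≤ n ∧ G n ≤ t}.ncard : ℕ) : ℤ)
        = ∑ a ∈ Finset.range m, ((t - G a) / m + 1) := by
  have hm' : (0 : ℤ) < m := by exact_mod_cast hm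
  set P : Finset (Σ _ : ℕ, ℕ) :=
    (Finset.range m).sigma (fun a => Finset.range ((t - G a) / m + 1).toNat) with hP
  set f : (Σ _ : ℕ, ℕ) → ℤ := fun p => (p.1 : ℤ) + m * (p.2 : ℤ) with hf
  have hinj : Set.InjOn f P := by
    rintro ⟨a, k⟩ h1 ⟨b, l⟩ h2 h
    simp only [hP, Finset.mem_coe, Finset.mem_sigma, Finset.mem_range] at h1 h2
    simp only [hf] at h
    have hab : a = b := by
      have e := congrArg (· % (m : ℤ)) h
      simp only [Int.add_mul_emod_self_left] at e
      rw [Int.emod_eq_of_lt (by omega) (by omega), Int.emod_eq_of_lt (by omega) (by omega)] at e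
      exact_mod_cast e
    subst hab
    have hkl : (k : ℤ) = l := mul_left_cancel₀ hm'.ne' (add_left_cancel h)
    have hkl' : k = l := by exact_mod_cast hkl
    rw [hkl']
  have hset : {n : ℤ | 0 ≤ n ∧ G n ≤ t} = ((P.image f : Finset ℤ) : Set ℤ) := by
    ext n
    simp only [Set.mem_ofPred_eq, Finset.coe_image, Set.mem_image, Finset.mem_coe, hP, hf,
      Finset.mem_sigma, Finset.mem_range]
    constructor
    · rintro ⟨h0, hn⟩
      have e1 := Int.emod_nonneg n hm'.ne'
      have e2 := Int.emod_lt_of_pos n hm'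
      have e3 := Int.emod_add_mul_ediv n m
      have e4 : 0 ≤ n / m := Int.ediv_nonneg h0 hm'.le
      refine ⟨⟨(n % m).toNat, (n / m).toNat⟩, ⟨by dsimp only; omega, ?_⟩, ?_⟩
      · have e5 : G n = G (n % m) + m * (n / m) := by rw [← hG, e3]
        have e6 : n / m ≤ (t - G (n % m)) / m := by
          rw [Int.le_ediv_iff_mul_le hm']
          linarith [mul_comm (n / m) (m : ℤ)]
        dsimp only
        rw [Int.toNat_of_nonneg e1]
        omega
      · dsimp only
        rw [Int.toNat_of_nonneg e1, Int.toNat_of_nonneg e4, e3]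
    · rintro ⟨⟨a, k⟩, ⟨-, hk⟩, rfl⟩
      dsimp only at hk ⊢
      refine ⟨by positivity, ?_⟩
      have e6 : (k : ℤ) ≤ (t - G a) / m := by omega
      rw [Int.le_ediv_iff_mul_le hm'] at e6
      rw [hG]
      linarith [mul_comm (k : ℤ) (m : ℤ)]
  rw [hset]
  refine ⟨Finset.finite_toSet _, ?_⟩
  rw [Set.ncard_coe_finset, Finset.card_image_of_injOn hinj, hP, Finset.card_sigma]
  push_cast
  refine Finset.sum_congr rfl fun a ha => ?_
  have h1 := hle a (Finset.mem_range.1 ha)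
  have h2 : 0 ≤ (t - G a) / m := Int.ediv_nonneg (by omega) hm'.le
  rw [Finset.card_range]
  omega

theorem omega_card (m r : ℕ) [NeZero r] (hm : 0 < m) (hr : 2 ≤ r)
    (hgcd : Nat.gcd r m = 1)
    (g : ℤ) (hg : 2 * g = ((r : ℤ) - 1) * ((m : ℤ) - 1))
    (s : Fin r → ℤ) (t : ℤ)
    (ht : (2 * (r : ℤ) - 1) * (m : ℤ) ≤ (∑ i : Fin r, s i) + t) :
    (Omega m r s t).Finite ∧
      ((Omega m r s t).ncard : ℤ) = 1 - g + (∑ i : Fin r, s i) + t := by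
  have hm' : (0 : ℤ) < m := by exact_mod_cast hm
  have hr' : (2 : ℤ) ≤ r := by exact_mod_cast hr
  set E : Finset (Fin r) := Finset.univ.erase (0 : Fin r) with hE
  have hEcard : (E.card : ℤ) = r - 1 := by
    rw [hE, Finset.card_erase_of_mem (Finset.mem_univ _), Finset.card_univ, Fintype.card_fin]
    omega
  have hS : ∑ i : Fin r, s i = s 0 + ∑ μ ∈ E, s μ :=
    (Finset.add_sum_erase _ _ (Finset.mem_univ _)).symm
  set G : ℤ → ℤ := fun n => r * (n - s 0) - m * ∑ μ ∈ E, (n - s 0 + s μ) / m with hGdef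
  -- `G` in terms of remainders instead of floors
  have hGrem : ∀ n, G n = n - (∑ i : Fin r, s i) + ∑ μ ∈ E, (n - s 0 + s μ) % m := by
    intro n
    have h : m * ∑ μ ∈ E, (n - s 0 + s μ) / m
        = ((r : ℤ) - 1) * (n - s 0) + ∑ μ ∈ E, s μ - ∑ μ ∈ E, (n - s 0 + s μ) % m := by
      rw [Finset.mul_sum, ← hEcard, ← nsmul_eq_mul, ← Finset.sum_const,
        ← Finset.sum_add_distrib, ← Finset.sum_sub_distrib]
      refine Finset.sum_congr rfl fun μ _ => ?_
      linarith [Int.emod_add_mul_ediv (n - s 0 + s μ) m]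
    simp only [hGdef]
    rw [h, hS]
    ring
  have hGshift : ∀ n k : ℤ, G (n + m * k) = G n + m * k := by
    intro n k
    rw [hGrem, hGrem]
    have h : ∀ μ, (n + m * k - s 0 + s μ) % (m : ℤ) = (n - s 0 + s μ) % m := by
      intro μ
      rw [show n + m * k - s 0 + s μ = n - s 0 + s μ + m * k by ring, Int.add_mul_emod_self_left]
    simp only [h]
    ring
  have hGle : ∀ a : ℕ, a < m → G a ≤ t := by
    intro a ha
    have h : ∑ μ ∈ E, ((a : ℤ) - s 0 + s μ) % m ≤ E.card • (m : ℤ) :=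
      Finset.sum_le_card_nsmul _ _ _ fun μ _ => (Int.emod_lt_of_pos _ hm').le
    rw [nsmul_eq_mul, hEcard] at h
    have ha' : (a : ℤ) < m := by exact_mod_cast ha
    rw [hGrem]
    nlinarith
  obtain ⟨hfin, hcard⟩ := count_of_shift m hm G t hGshift hGle
  set φ : ℤ → Fin r → ℤ := fun n μ => if μ = 0 then n - s 0 else -((n - s 0 + s μ) / m) with hφ
  have hφ0 : ∀ n, φ n 0 = n - s 0 := fun n => by simp [hφ]
  have hφμ : ∀ n μ, μ ≠ 0 → φ n μ = -((n - s 0 + s μ) / m) := fun n μ h => by simp [hφ, h]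
  have hφinj : Function.Injective φ := by
    intro a b hab
    have := congrFun hab 0
    rw [hφ0, hφ0] at this
    linarith
  have hφsum : ∀ n, (r : ℤ) * φ n 0 + m * ∑ μ ∈ E, φ n μ = G n := by
    intro n
    have : ∑ μ ∈ E, φ n μ = -∑ μ ∈ E, (n - s 0 + s μ) / m := by
      rw [← Finset.sum_neg_distrib]
      exact Finset.sum_congr rfl fun μ hμ => hφμ n μ (Finset.ne_of_mem_erase hμ)
    rw [this, hφ0]
    simp only [hGdef]
    ring
  have hΩ : Omega m r s t = φ '' {n : ℤ | 0 ≤ n ∧ G n ≤ t} := by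
    ext v
    simp only [Omega, Set.mem_ofPred_eq, Set.mem_image]
    constructor
    · rintro ⟨h0, hμ, hle⟩
      have hv : φ (v 0 + s 0) = v := by
        funext μ
        by_cases h : μ = 0
        · rw [h, hφ0]
          ring
        · obtain ⟨h1, h2⟩ := hμ μ h
          rw [hφμ _ _ h]
          have : (v 0 + s 0 - s 0 + s μ) / (m : ℤ) = -v μ := by
            rw [Int.ediv_eq_iff_of_pos hm']
            constructor <;> linarith
          rw [this, neg_neg]
      refine ⟨v 0 + s 0, ⟨h0, ?_⟩, hv⟩
      rw [← hφsum, hv]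
      exact hle
    · rintro ⟨n, ⟨h0, hle⟩, rfl⟩
      refine ⟨by rw [hφ0]; linarith, ?_, by rw [hφsum]; exact hle⟩
      intro μ h
      rw [hφ0, hφμ _ _ h]
      have e := Int.emod_add_mul_ediv (n - s 0 + s μ) m
      have e1 := Int.emod_nonneg (n - s 0 + s μ) hm'.ne'
      have e2 := Int.emod_lt_of_pos (n - s 0 + s μ) hm'
      constructor <;> linarith
  rw [hΩ]
  refine ⟨hfin.image φ, ?_⟩
  rw [Set.ncard_image_of_injective _ hφinj, hcard]
  have hcop : IsCoprime (m : ℤ) (-(r : ℤ)) :=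
    (Nat.isCoprime_iff_coprime.2 (Nat.Coprime.symm hgcd)).neg_right
  have hone : IsCoprime (m : ℤ) 1 := isCoprime_one_right
  -- the remainders of `t - G a`, which is congruent to `-r a + (t + r s₁)` mod `m`
  have hA : 2 * ∑ a ∈ Finset.range m, (t - G a) % (m : ℤ) = m * ((m : ℤ) - 1) := by
    rw [← sum_affine_emod m hm _ (t + r * s 0) hcop]
    congr 1
    refine Finset.sum_congr rfl fun a _ => ?_
    simp only [hGdef]
    rw [show t - ((r : ℤ) * ((a : ℤ) - s 0) - m * ∑ μ ∈ E, ((a : ℤ) - s 0 + s μ) / m)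
      = -(r : ℤ) * a + (t + r * s 0) + m * ∑ μ ∈ E, ((a : ℤ) - s 0 + s μ) / m by ring,
      Int.add_mul_emod_self_left]
  have hB : 2 * ∑ a ∈ Finset.range m, ∑ μ ∈ E, ((a : ℤ) - s 0 + s μ) % (m : ℤ)
      = ((r : ℤ) - 1) * (m * ((m : ℤ) - 1)) := by
    rw [Finset.sum_comm, Finset.mul_sum, ← hEcard, ← nsmul_eq_mul, ← Finset.sum_const]
    refine Finset.sum_congr rfl fun μ _ => ?_
    rw [← sum_affine_emod m hm 1 (- s 0 + s μ) hone]
    congr 1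
    refine Finset.sum_congr rfl fun a _ => ?_
    congr 1
    ring
  have hC : 2 * ∑ a ∈ Finset.range m, (a : ℤ) = m * ((m : ℤ) - 1) := by
    rw [← sum_affine_emod m hm 1 0 hone]
    congr 1
    refine Finset.sum_congr rfl fun a ha => ?_
    have := Finset.mem_range.1 ha
    rw [one_mul, add_zero, Int.emod_eq_of_lt (by omega) (by omega)]
  have hD : m * ∑ a ∈ Finset.range m, ((t - G a) / (m : ℤ) + 1)
      = m * (t + ∑ i : Fin r, s i) + m * m - ∑ a ∈ Finset.range m, (a : ℤ)
        - ∑ a ∈ Finset.range m, ∑ μ ∈ E, ((a : ℤ) - s 0 + s μ) % (m : ℤ)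
        - ∑ a ∈ Finset.range m, (t - G a) % (m : ℤ) := by
    have hconst : ∀ c : ℤ, m * c = ∑ _a ∈ Finset.range m, c := by
      intro c
      rw [Finset.sum_const, Finset.card_range, nsmul_eq_mul]
    rw [hconst (t + _), hconst (m : ℤ), Finset.mul_sum, ← Finset.sum_add_distrib,
      ← Finset.sum_sub_distrib, ← Finset.sum_sub_distrib, ← Finset.sum_sub_distrib]
    refine Finset.sum_congr rfl fun a _ => ?_
    linarith [Int.emod_add_mul_ediv (t - G a) m, hGrem a]
  have h2m : (2 * (m : ℤ)) ≠ 0 := by positivity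
  apply mul_left_cancel₀ h2m
  linear_combination 2 * hD - hA - hB - hC + m * hg
end

section
/- Let m and r be positive integers with gcd(r, m) = 1 and r ≥ 2, let a and b be integers with a·r + b·m = 1, and let s_1, …, s_r, t be integers. Define Θ_{s_1,…,s_r,t} as the set of tuples (u, v_2, …, v_r) ∈ ℤ^r such that: −(a + b·m)·u − m·(v_2 + ⋯ + v_r) + s_1 ≥ 0; 0 ≤ −a·u + m·v_μ + s_μ < m for every μ with 2 ≤ μ ≤ r; and u ≥ −t. Then the map sending (i, j_2, …, j_r) to (u, v_2, …, v_r), where u = −r·i − m·(j_2 + ⋯ + j_r) and v_μ = b·i − a·(j_2 + ⋯ + j_r) + j_μ for 2 ≤ μ ≤ r, is a bijection from Ω_{s_1,…,s_r,t} onto Θ_{s_1,…,s_r,t}; in particular the two sets have the same cardinality. -/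
/-- The lattice point set `Θ_{s₁,…,s_r,t}`: tuples `(u, v₂, …, v_r)`, encoded as
`w : Fin r → ℤ` with `w 0 = u` and `w μ = v_{μ+1}` for `μ ≠ 0`. -/
def Theta (m r : ℕ) [NeZero r] (a b : ℤ) (s : Fin r → ℤ) (t : ℤ) : Set (Fin r → ℤ) :=
  {w : Fin r → ℤ |
    0 ≤ -(a + b * (m : ℤ)) * w 0 - (m : ℤ) * (∑ μ ∈ Finset.univ.erase (0 : Fin r), w μ) + s 0 ∧
    (∀ μ : Fin r, μ ≠ 0 →
      0 ≤ -a * w 0 + (m : ℤ) * w μ + s μ ∧ -a * w 0 + (m : ℤ) * w μ + s μ < (m : ℤ)) ∧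
    -t ≤ w 0}

/-- Sum of the coordinates of `x` other than the `0`-th one. -/
def tailSum {r : ℕ} [NeZero r] (x : Fin r → ℤ) : ℤ :=
  ∑ ν ∈ Finset.univ.erase (0 : Fin r), x ν

/-- The change of coordinates `(i, j₂, …, j_r) ↦ (u, v₂, …, v_r)`. -/
def omegaMap (m r : ℕ) [NeZero r] (a b : ℤ) (v : Fin r → ℤ) : Fin r → ℤ := fun μ =>
  if μ = 0 then -(r : ℤ) * v 0 - (m : ℤ) * tailSum v else b * v 0 - a * tailSum v + v μ

/-- The inverse change of coordinates `(u, v₂, …, v_r) ↦ (i, j₂, …, j_r)`. -/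
def thetaMap (m r : ℕ) [NeZero r] (a b : ℤ) (w : Fin r → ℤ) : Fin r → ℤ := fun μ =>
  if μ = 0 then -(a + b * (m : ℤ)) * w 0 - (m : ℤ) * tailSum w else b * w 0 + tailSum w + w μ

lemma tailSum_shift {r : ℕ} [NeZero r] (c d : ℤ) (x : Fin r → ℤ) :
    tailSum (fun μ => if μ = 0 then d else c + x μ) = ((r : ℤ) - 1) * c + tailSum x := by
  have hcongr : tailSum (fun μ => if μ = 0 then d else c + x μ)
      = ∑ ν ∈ Finset.univ.erase (0 : Fin r), (c + x ν) :=
    Finset.sum_congr rfl fun ν hν => if_neg (Finset.ne_of_mem_erase hν)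
  have hpos : 1 ≤ r := NeZero.one_le
  rw [hcongr, Finset.sum_add_distrib, Finset.sum_const,
    Finset.card_erase_of_mem (Finset.mem_univ _), Finset.card_univ, Fintype.card_fin,
    nsmul_eq_mul, Nat.cast_sub hpos, Nat.cast_one]
  rfl

section

variable (m r : ℕ) [NeZero r] (a b : ℤ)

lemma omegaMap_zero (v : Fin r → ℤ) :
    omegaMap m r a b v 0 = -(r : ℤ) * v 0 - (m : ℤ) * tailSum v := if_pos rfl

lemma omegaMap_ne (v : Fin r → ℤ) {μ : Fin r} (h : μ ≠ 0) :
    omegaMap m r a b v μ = b * v 0 - a * tailSum v + v μ := if_neg h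

lemma tailSum_omegaMap (v : Fin r → ℤ) :
    tailSum (omegaMap m r a b v)
      = ((r : ℤ) - 1) * (b * v 0 - a * tailSum v) + tailSum v :=
  tailSum_shift _ _ v

lemma thetaMap_zero (w : Fin r → ℤ) :
    thetaMap m r a b w 0 = -(a + b * (m : ℤ)) * w 0 - (m : ℤ) * tailSum w := if_pos rfl

lemma thetaMap_ne (w : Fin r → ℤ) {μ : Fin r} (h : μ ≠ 0) :
    thetaMap m r a b w μ = b * w 0 + tailSum w + w μ := if_neg h

lemma tailSum_thetaMap (w : Fin r → ℤ) :
    tailSum (thetaMap m r a b w)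
      = ((r : ℤ) - 1) * (b * w 0 + tailSum w) + tailSum w :=
  tailSum_shift _ _ w

variable {m r a b}

lemma thetaMap_omegaMap (hab : a * (r : ℤ) + b * (m : ℤ) = 1) (v : Fin r → ℤ) :
    thetaMap m r a b (omegaMap m r a b v) = v := by
  funext μ
  by_cases h : μ = 0
  · subst h
    rw [thetaMap_zero, omegaMap_zero, tailSum_omegaMap]
    linear_combination (v 0 + (m : ℤ) * tailSum v) * hab
  · rw [thetaMap_ne _ _ _ _ _ h, omegaMap_ne _ _ _ _ _ h, omegaMap_zero, tailSum_omegaMap]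
    linear_combination (-tailSum v) * hab

lemma omegaMap_thetaMap (hab : a * (r : ℤ) + b * (m : ℤ) = 1) (w : Fin r → ℤ) :
    omegaMap m r a b (thetaMap m r a b w) = w := by
  funext μ
  by_cases h : μ = 0
  · subst h
    rw [omegaMap_zero, thetaMap_zero, tailSum_thetaMap]
    linear_combination w 0 * hab
  · rw [omegaMap_ne _ _ _ _ _ h, thetaMap_ne _ _ _ _ _ h, thetaMap_zero, tailSum_thetaMap]
    linear_combination (-(b * w 0) - tailSum w) * hab

lemma omegaMap_mem_Theta_iff (hab : a * (r : ℤ) + b * (m : ℤ) = 1) (s : Fin r → ℤ) (t : ℤ)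
    (v : Fin r → ℤ) : omegaMap m r a b v ∈ Theta m r a b s t ↔ v ∈ Omega m r s t := by
  have h0 : -(a + b * (m : ℤ)) * omegaMap m r a b v 0
      - (m : ℤ) * tailSum (omegaMap m r a b v) = v 0 := by
    rw [← thetaMap_zero, thetaMap_omegaMap hab]
  have hμ : ∀ μ : Fin r, μ ≠ 0 →
      -a * omegaMap m r a b v 0 + (m : ℤ) * omegaMap m r a b v μ = v 0 + (m : ℤ) * v μ := by
    intro μ h
    rw [omegaMap_zero, omegaMap_ne _ _ _ _ _ h]
    linear_combination v 0 * hab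
  refine and_congr ?_ (and_congr (forall₂_congr fun μ h => ?_) ?_)
  · change 0 ≤ -(a + b * (m : ℤ)) * omegaMap m r a b v 0
      - (m : ℤ) * tailSum (omegaMap m r a b v) + s 0 ↔ _
    rw [h0]
  · rw [hμ μ h]
  · change _ ↔ (r : ℤ) * v 0 + (m : ℤ) * tailSum v ≤ t
    rw [omegaMap_zero]
    constructor <;> intro h <;> linarith

end

theorem omega_bijOn_theta (m r : ℕ) [NeZero r] (hm : 0 < m) (hr : 2 ≤ r)
    (hgcd : Nat.gcd r m = 1) (a b : ℤ) (hab : a * (r : ℤ) + b * (m : ℤ) = 1)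
    (s : Fin r → ℤ) (t : ℤ) :
    Set.BijOn
        (fun v : Fin r → ℤ => fun μ : Fin r =>
          if μ = 0 then
            -(r : ℤ) * v 0 - (m : ℤ) * ∑ ν ∈ Finset.univ.erase (0 : Fin r), v ν
          else
            b * v 0 - a * (∑ ν ∈ Finset.univ.erase (0 : Fin r), v ν) + v μ)
        (Omega m r s t) (Theta m r a b s t) ∧
      (Omega m r s t).ncard = (Theta m r a b s t).ncard := by
  have hbij : Set.BijOn (omegaMap m r a b) (Omega m r s t) (Theta m r a b s t) := by
    refine ⟨fun v hv => (omegaMap_mem_Theta_iff hab s t v).2 hv,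
      (Function.LeftInverse.injective (thetaMap_omegaMap hab)).injOn, fun w hw => ?_⟩
    refine ⟨thetaMap m r a b w, ?_, omegaMap_thetaMap hab w⟩
    rwa [← omegaMap_mem_Theta_iff hab, omegaMap_thetaMap hab]
  refine ⟨hbij, ?_⟩
  rw [← hbij.image_eq, hbij.injOn.ncard_image]
end

section
/- Let m and r be positive integers with gcd(r, m) = 1 and r ≥ 2, and let s_1, …, s_r, t be integers. Then the cardinality of Ω_{s_1,…,s_r,t} equals the cardinality of the set of pairs (i, ι) ∈ ℤ² satisfying 0 ≤ i ≤ m−1, ι ≥ 0, and r·i + m·( ⌈(−i − s_1)/m⌉ + ⌈(−i − s_2)/m⌉ + ⋯ + ⌈(−i − s_r)/m⌉ ) + m·ι ≤ t. -/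
/-- The integer ceiling `⌈(-i - a) / m⌉` occurring in the pair count. -/
def shiftCeil (m : ℕ) (i a : ℤ) : ℤ := ⌈((-i - a : ℤ) : ℚ) / (m : ℚ)⌉

lemma shiftCeil_le_iff {m : ℕ} (hm : 0 < m) (i a z : ℤ) :
    shiftCeil m i a ≤ z ↔ 0 ≤ i + (m : ℤ) * z + a := by
  have hm' : (0 : ℚ) < m := by exact_mod_cast hm
  rw [shiftCeil, Int.ceil_le, div_le_iff₀ hm']
  have : (((-i - a : ℤ) : ℚ) ≤ (z : ℚ) * m) ↔ (-i - a : ℤ) ≤ z * (m : ℤ) := by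
    exact_mod_cast Iff.rfl
  rw [this, mul_comm z]
  constructor <;> intro h <;> linarith

lemma eq_shiftCeil_iff {m : ℕ} (hm : 0 < m) (i a z : ℤ) :
    z = shiftCeil m i a ↔ 0 ≤ i + (m : ℤ) * z + a ∧ i + (m : ℤ) * z + a < m := by
  have h1 := shiftCeil_le_iff hm i a z
  have h2 := shiftCeil_le_iff hm i a (z - 1)
  have h3 : (m : ℤ) * (z - 1) = m * z - m := by ring
  rw [h3] at h2
  omega

/-- The point of `Omega` associated with a pair `(i, ι)`. -/
def pairToPoint (m r : ℕ) [NeZero r] (s : Fin r → ℤ) (p : ℤ × ℤ) : Fin r → ℤ := fun μ =>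
  if μ = 0 then p.1 + m * (p.2 + shiftCeil m p.1 (s 0))
  else shiftCeil m p.1 (s μ) - (p.2 + shiftCeil m p.1 (s 0))

/-- The linear form bounding `Omega`, evaluated at `pairToPoint`, is the one in the pair count. -/
lemma pairToPoint_form (m r : ℕ) [NeZero r] (s : Fin r → ℤ) (p : ℤ × ℤ) :
    (r : ℤ) * pairToPoint m r s p 0 +
        (m : ℤ) * ∑ μ ∈ Finset.univ.erase (0 : Fin r), pairToPoint m r s p μ =
      (r : ℤ) * p.1 + (m : ℤ) * (∑ μ : Fin r, shiftCeil m p.1 (s μ)) + (m : ℤ) * p.2 := by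
  have h1 : ∑ μ ∈ Finset.univ.erase (0 : Fin r), pairToPoint m r s p μ =
      ∑ μ ∈ Finset.univ.erase (0 : Fin r),
        (shiftCeil m p.1 (s μ) - (p.2 + shiftCeil m p.1 (s 0))) :=
    Finset.sum_congr rfl fun μ hμ => by simp [pairToPoint, Finset.ne_of_mem_erase hμ]
  have h2 := Finset.add_sum_erase Finset.univ (fun μ => shiftCeil m p.1 (s μ))
    (Finset.mem_univ (0 : Fin r))
  have h3 : ((r - 1 : ℕ) : ℤ) = (r : ℤ) - 1 := by
    have := NeZero.pos r
    omega
  rw [h1, Finset.sum_sub_distrib, Finset.sum_const, Finset.card_erase_of_mem (Finset.mem_univ _),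
    Finset.card_univ, Fintype.card_fin, ← h2, nsmul_eq_mul, h3]
  simp only [pairToPoint, if_true]
  ring

theorem omega_card_eq_pair_count (m r : ℕ) [NeZero r] (hm : 0 < m) (hr : 2 ≤ r)
    (hgcd : Nat.gcd r m = 1) (s : Fin r → ℤ) (t : ℤ) :
    (Omega m r s t).ncard =
      {p : ℤ × ℤ | 0 ≤ p.1 ∧ p.1 ≤ (m : ℤ) - 1 ∧ 0 ≤ p.2 ∧
        (r : ℤ) * p.1 +
            (m : ℤ) * (∑ μ : Fin r, ⌈((-p.1 - s μ : ℤ) : ℚ) / (m : ℚ)⌉) +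
            (m : ℤ) * p.2 ≤ t}.ncard := by
  have hmZ : (0 : ℤ) < m := by exact_mod_cast hm
  symm
  refine Set.ncard_congr (fun p _ => pairToPoint m r s p) ?_ ?_ ?_
  · rintro p ⟨-, -, hι, ht⟩
    refine ⟨?_, fun μ hμ => ?_, (pairToPoint_form m r s p).trans_le ht⟩
    · have := (shiftCeil_le_iff hm p.1 (s 0) (p.2 + shiftCeil m p.1 (s 0))).1 (by linarith)
      simpa [pairToPoint] using this
    · have := (eq_shiftCeil_iff hm p.1 (s μ) _).1 rfl
      simp only [pairToPoint, if_true, if_neg hμ]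
      constructor <;> linarith
  · rintro ⟨i, ι⟩ ⟨i', ι'⟩ ⟨h0, h1, -, -⟩ ⟨h0', h1', -, -⟩ h
    have h := congrFun h 0
    simp only [pairToPoint, if_true] at h h0 h1 h0' h1'
    -- Both `i` and `i'` are the remainder of the common first coordinate modulo `m`.
    have hi : i = i' := by
      have := congrArg (· % (m : ℤ)) h
      simp only [Int.add_mul_emod_self_left] at this
      rwa [Int.emod_eq_of_lt h0 (by omega), Int.emod_eq_of_lt h0' (by omega)] at this
    subst hi
    have := mul_left_cancel₀ hmZ.ne' (add_left_cancel h)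
    rw [add_right_cancel this]
  · rintro v ⟨hv0, hv, ht⟩
    have hdiv := Int.emod_add_mul_ediv (v 0) m
    set i := v 0 % (m : ℤ) with hi
    set l := v 0 / (m : ℤ) with hl
    have hpt : pairToPoint m r s (i, l - shiftCeil m i (s 0)) = v := by
      funext μ
      by_cases hμ : μ = 0
      · subst hμ
        simp [pairToPoint, hdiv]
      · have h := (eq_shiftCeil_iff hm i (s μ) (v μ + l)).2 (by
          have := hv μ hμ
          constructor <;> linarith)
        simp only [pairToPoint, if_neg hμ, ← h]
        ring
    refine ⟨(i, l - shiftCeil m i (s 0)), ⟨Int.emod_nonneg _ hmZ.ne', ?_, ?_, ?_⟩, hpt⟩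
    · have := Int.emod_lt_of_pos (v 0) hmZ
      exact Int.le_sub_one_of_lt this
    · exact sub_nonneg.2 ((shiftCeil_le_iff hm i (s 0) l).2 (by rw [hdiv]; exact hv0))
    · have h := pairToPoint_form m r s (i, l - shiftCeil m i (s 0))
      rw [hpt] at h
      exact h.symm.trans_le ht
end

section
/- Let m and r be positive integers with gcd(r, m) = 1 and r ≥ 2, and let s_1, …, s_r, t be integers. Then the cardinality of Ω_{s_1,…,s_r,t} equals the cardinality of Ω_{s_1−1, s_2, …, s_r, t} plus 1 if and only if m·( ⌈(s_1 − s_2)/m⌉ + ⌈(s_1 − s_3)/m⌉ + ⋯ + ⌈(s_1 − s_r)/m⌉ ) ≤ t + r·s_1. -/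
lemma ceil_div_eq_iff_window {m : ℕ} (hm : 0 < m) (a j : ℤ) :
    ⌈(a : ℚ) / (m : ℚ)⌉ = j ↔ 0 ≤ (m : ℤ) * j - a ∧ (m : ℤ) * j - a < m := by
  have hm' : (0 : ℚ) < m := by exact_mod_cast hm
  rw [Int.ceil_eq_iff, lt_div_iff₀ hm', div_le_iff₀ hm']
  have h1 : ((j : ℚ) - 1) * m < a ↔ (j - 1) * (m : ℤ) < a := by
    exact_mod_cast Iff.rfl
  have h2 : (a : ℚ) ≤ j * m ↔ a ≤ j * (m : ℤ) := by
    exact_mod_cast Iff.rfl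
  rw [h1, h2]
  constructor <;> rintro ⟨_, _⟩ <;> constructor <;> linarith

/-- In `Ω`, the coordinate `i` determines all the others. -/
lemma omega_coord_eq {m r : ℕ} [NeZero r] (hm : 0 < m) {s : Fin r → ℤ} {t : ℤ}
    {v : Fin r → ℤ} (hv : v ∈ Omega m r s t) {μ : Fin r} (hμ : μ ≠ 0) :
    v μ = ⌈((-v 0 - s μ : ℤ) : ℚ) / (m : ℚ)⌉ := by
  obtain ⟨h1, h2⟩ := hv.2.1 μ hμ
  exact ((ceil_div_eq_iff_window hm _ _).2 ⟨by linarith, by linarith⟩).symm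

lemma omega_finite {m r : ℕ} [NeZero r] (hm : 0 < m) (s : Fin r → ℤ) (t : ℤ) :
    (Omega m r s t).Finite := by
  refine Set.Finite.of_injOn (f := fun v => v 0)
    (t := Set.Icc (-s 0) (t + ∑ μ ∈ Finset.univ.erase (0 : Fin r), s μ)) ?_ ?_
    (Set.finite_Icc _ _)
  · rintro v ⟨h0, h1, h2⟩
    refine ⟨by simp only; linarith, ?_⟩
    -- Summing `0 ≤ i + m j_μ + s_μ` over the `r - 1` indices `μ ≠ 0` bounds `i` from above.
    have h3 : 0 ≤ ∑ μ ∈ Finset.univ.erase (0 : Fin r), (v 0 + (m : ℤ) * v μ + s μ) :=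
      Finset.sum_nonneg fun μ hμ => (h1 μ (Finset.ne_of_mem_erase hμ)).1
    have hc : ((Finset.univ.erase (0 : Fin r)).card : ℤ) = r - 1 := by
      rw [Finset.card_erase_of_mem (Finset.mem_univ _), Finset.card_univ, Fintype.card_fin,
        Nat.cast_sub (NeZero.one_le), Nat.cast_one]
    rw [Finset.sum_add_distrib, Finset.sum_add_distrib, Finset.sum_const, nsmul_eq_mul, hc,
      ← Finset.mul_sum] at h3
    simp only
    linarith
  · intro v hv w hw (h : v 0 = w 0)
    funext μ
    by_cases hμ : μ = 0
    · rw [hμ, h]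
    · rw [omega_coord_eq hm hv hμ, omega_coord_eq hm hw hμ, h]

lemma mem_omega_pred_iff {m r : ℕ} [NeZero r] {s : Fin r → ℤ} {t : ℤ} {v : Fin r → ℤ} :
    v ∈ Omega m r (Function.update s 0 (s 0 - 1)) t ↔ v ∈ Omega m r s t ∧ v 0 ≠ -s 0 := by
  have h : ∀ μ : Fin r, μ ≠ 0 → Function.update s 0 (s 0 - 1) μ = s μ := fun μ hμ =>
    Function.update_of_ne hμ _ _
  simp only [Omega, Set.mem_ofPred_eq, Function.update_self]
  constructor
  · rintro ⟨h0, h1, h2⟩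
    refine ⟨⟨by linarith, fun μ hμ => ?_, h2⟩, by omega⟩
    simpa only [h μ hμ] using h1 μ hμ
  · rintro ⟨⟨h0, h1, h2⟩, h3⟩
    refine ⟨by omega, fun μ hμ => ?_, h2⟩
    simpa only [h μ hμ] using h1 μ hμ

/-- The only possible point of `Ω` with `i = -s₁`. -/
def omegaCorner (m r : ℕ) [NeZero r] (s : Fin r → ℤ) : Fin r → ℤ := fun μ =>
  if μ = 0 then -s 0 else ⌈((s 0 - s μ : ℤ) : ℚ) / (m : ℚ)⌉

lemma eq_omegaCorner {m r : ℕ} [NeZero r] (hm : 0 < m) {s : Fin r → ℤ} {t : ℤ}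
    {v : Fin r → ℤ} (hv : v ∈ Omega m r s t) (h0 : v 0 = -s 0) : v = omegaCorner m r s := by
  funext μ
  by_cases hμ : μ = 0
  · simp [omegaCorner, hμ, h0]
  · rw [omega_coord_eq hm hv hμ, h0, neg_neg, omegaCorner, if_neg hμ]

lemma omegaCorner_mem_iff {m r : ℕ} [NeZero r] (hm : 0 < m) {s : Fin r → ℤ} {t : ℤ} :
    omegaCorner m r s ∈ Omega m r s t ↔
      (m : ℤ) * ∑ μ ∈ Finset.univ.erase (0 : Fin r), ⌈((s 0 - s μ : ℤ) : ℚ) / (m : ℚ)⌉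
        ≤ t + (r : ℤ) * s 0 := by
  have hz : omegaCorner m r s 0 = -s 0 := if_pos rfl
  have hs : ∑ μ ∈ Finset.univ.erase (0 : Fin r), omegaCorner m r s μ =
      ∑ μ ∈ Finset.univ.erase (0 : Fin r), ⌈((s 0 - s μ : ℤ) : ℚ) / (m : ℚ)⌉ :=
    Finset.sum_congr rfl fun μ hμ => if_neg (Finset.ne_of_mem_erase hμ)
  rw [← hs]
  constructor
  · rintro ⟨-, -, h⟩
    rw [hz] at h
    linarith
  · intro h
    refine ⟨by rw [hz]; simp, fun μ hμ => ?_, by rw [hz]; linarith⟩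
    have hj : ⌈((s 0 - s μ : ℤ) : ℚ) / (m : ℚ)⌉ = omegaCorner m r s μ := (if_neg hμ).symm
    obtain ⟨h1, h2⟩ := (ceil_div_eq_iff_window hm _ _).1 hj
    rw [hz]
    exact ⟨by linarith, by linarith⟩

lemma omega_eq_insert {m r : ℕ} [NeZero r] (hm : 0 < m) {s : Fin r → ℤ} {t : ℤ}
    (hc : omegaCorner m r s ∈ Omega m r s t) :
    Omega m r s t =
      insert (omegaCorner m r s) (Omega m r (Function.update s 0 (s 0 - 1)) t) := by
  ext v
  rw [Set.mem_insert_iff, mem_omega_pred_iff]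
  constructor
  · intro hv
    by_cases h0 : v 0 = -s 0
    · exact Or.inl (eq_omegaCorner hm hv h0)
    · exact Or.inr ⟨hv, h0⟩
  · rintro (rfl | h)
    · exact hc
    · exact h.1

theorem omega_card_succ_s1 (m r : ℕ) [NeZero r] (hm : 0 < m) (hr : 2 ≤ r)
    (hgcd : Nat.gcd r m = 1) (s : Fin r → ℤ) (t : ℤ) :
    (Omega m r s t).ncard = (Omega m r (Function.update s 0 (s 0 - 1)) t).ncard + 1 ↔
      (m : ℤ) * ∑ μ ∈ Finset.univ.erase (0 : Fin r), ⌈((s 0 - s μ : ℤ) : ℚ) / (m : ℚ)⌉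
        ≤ t + (r : ℤ) * s 0 := by
  rw [← omegaCorner_mem_iff hm]
  constructor
  · intro h
    by_contra hc
    have heq : Omega m r s t = Omega m r (Function.update s 0 (s 0 - 1)) t := by
      ext v
      rw [mem_omega_pred_iff]
      exact ⟨fun hv => ⟨hv, fun h0 => hc (eq_omegaCorner hm hv h0 ▸ hv)⟩, fun hv => hv.1⟩
    rw [← heq] at h
    omega
  · intro hc
    rw [omega_eq_insert hm hc]
    refine Set.ncard_insert_of_notMem (fun h => ?_) (omega_finite hm _ _)
    exact (mem_omega_pred_iff.1 h).2 (if_pos rfl)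
end

section
/- Let m and r be positive integers with gcd(r, m) = 1 and r ≥ 2, let a and b be integers with a·r + b·m = 1, and let s_1, …, s_r, t be integers. Then the cardinality of Ω_{s_1,…,s_r,t} equals the cardinality of Ω_{s_1, …, s_r, t−1} plus 1 if and only if m·( ⌈(−a·t − s_2)/m⌉ + ⌈(−a·t − s_3)/m⌉ + ⋯ + ⌈(−a·t − s_r)/m⌉ ) ≤ s_1 + (a + b·m)·t. -/
lemma residue_shift_unique {m x y j j' : ℤ} (h0 : 0 ≤ x + m * j + y) (h1 : x + m * j + y < m)
    (h0' : 0 ≤ x + m * j' + y) (h1' : x + m * j' + y < m) : j = j' := by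
  have hm : 0 < m := by linarith
  have e1 : m * (j - j') < m * 1 := by linarith
  have e2 : m * (j' - j) < m * 1 := by linarith
  have := lt_of_mul_lt_mul_left e1 hm.le
  have := lt_of_mul_lt_mul_left e2 hm.le
  omega

lemma ceil_residue_bounds {m : ℕ} (hm : 0 < m) (x y : ℤ) :
    0 ≤ x + m * ⌈((-x - y : ℤ) : ℚ) / (m : ℚ)⌉ + y ∧
      x + m * ⌈((-x - y : ℤ) : ℚ) / (m : ℚ)⌉ + y < m := by
  have hq : (0 : ℚ) < m := by exact_mod_cast hm
  have h1 := Int.le_ceil (((-x - y : ℤ) : ℚ) / (m : ℚ))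
  have h2 := Int.ceil_lt_add_one (((-x - y : ℤ) : ℚ) / (m : ℚ))
  generalize ⌈((-x - y : ℤ) : ℚ) / (m : ℚ)⌉ = c at *
  rw [div_le_iff₀ hq] at h1
  rw [← sub_lt_iff_lt_add, lt_div_iff₀ hq] at h2
  have h1' : -x - y ≤ c * m := by exact_mod_cast h1
  have h2' : (c - 1) * m < -x - y := by exact_mod_cast h2
  constructor <;> linarith

lemma card_univ_erase_zero (r : ℕ) [NeZero r] :
    (((Finset.univ.erase (0 : Fin r)).card : ℕ) : ℤ) = (r : ℤ) - 1 := by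
  rw [Finset.card_erase_of_mem (Finset.mem_univ _), Finset.card_univ, Fintype.card_fin,
    Nat.cast_sub (NeZero.one_le), Nat.cast_one]

lemma Omega_finite (m r : ℕ) [NeZero r] (s : Fin r → ℤ) (t : ℤ) : (Omega m r s t).Finite := by
  refine Set.Finite.of_injOn (f := fun v : Fin r → ℤ => v 0)
    (t := Set.Icc (-s 0) (t + ∑ μ ∈ Finset.univ.erase (0 : Fin r), s μ)) ?_ ?_
    (Set.finite_Icc _ _)
  · rintro v ⟨h0, h1, h2⟩
    refine ⟨by simp only; linarith, ?_⟩
    have hsum : 0 ≤ ∑ μ ∈ Finset.univ.erase (0 : Fin r), (v 0 + (m : ℤ) * v μ + s μ) :=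
      Finset.sum_nonneg fun μ hμ => (h1 μ (Finset.ne_of_mem_erase hμ)).1
    rw [Finset.sum_add_distrib, Finset.sum_add_distrib, ← Finset.mul_sum, Finset.sum_const,
      nsmul_eq_mul, card_univ_erase_zero] at hsum
    simp only
    linarith
  · rintro v ⟨-, hv, -⟩ w ⟨-, hw, -⟩ (h : v 0 = w 0)
    funext μ
    by_cases hμ : μ = 0
    · rw [hμ, h]
    · have hw' := hw μ hμ
      rw [← h] at hw'
      exact residue_shift_unique (hv μ hμ).1 (hv μ hμ).2 hw'.1 hw'.2

/-- The point with `v 0 = a * t + m * k` and `v μ = c μ - k` for `μ ≠ 0`. When `c μ` is the ceiling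
`⌈(-a * t - s μ) / m⌉` and `k = b * t - ∑ c μ`, it is the only possible point of `Omega m r s t` on
the level `r * v 0 + m * ∑ v μ = t`. -/
def levelPoint (m : ℕ) {r : ℕ} [NeZero r] (a t k : ℤ) (c : Fin r → ℤ) : Fin r → ℤ :=
  fun μ => if μ = 0 then a * t + m * k else c μ - k

/-- The level set has at most one point: solving the congruence `r * v 0 ≡ t` modulo `m`
determines everything. -/
lemma eq_levelPoint {m r : ℕ} [NeZero r] (hm : 0 < m) {a b : ℤ}
    (hab : a * (r : ℤ) + b * (m : ℤ) = 1) {s c : Fin r → ℤ} {t : ℤ}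
    (hc : ∀ μ, 0 ≤ a * t + m * c μ + s μ ∧ a * t + m * c μ + s μ < m) {v : Fin r → ℤ}
    (hv : ∀ μ : Fin r, μ ≠ 0 → 0 ≤ v 0 + (m : ℤ) * v μ + s μ ∧ v 0 + (m : ℤ) * v μ + s μ < (m : ℤ))
    (hlev : (r : ℤ) * v 0 + (m : ℤ) * ∑ μ ∈ Finset.univ.erase (0 : Fin r), v μ = t) :
    v = levelPoint m a t (b * t - ∑ μ ∈ Finset.univ.erase (0 : Fin r), c μ) c := by
  obtain ⟨k, hk⟩ : ∃ k, v 0 = a * t + m * k :=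
    ⟨b * v 0 - a * ∑ μ ∈ Finset.univ.erase (0 : Fin r), v μ, by
      linear_combination (-v 0) * hab + a * hlev⟩
  have hvμ : ∀ μ : Fin r, μ ≠ 0 → v μ = c μ - k := by
    intro μ hμ
    have h := hv μ hμ
    have h' := hc μ
    exact residue_shift_unique h.1 h.2 (by rw [hk]; linarith) (by rw [hk]; linarith)
  have hsum : ∑ μ ∈ Finset.univ.erase (0 : Fin r), v μ
      = ∑ μ ∈ Finset.univ.erase (0 : Fin r), c μ - ((r : ℤ) - 1) * k := by
    rw [Finset.sum_congr rfl fun μ hμ => hvμ μ (Finset.ne_of_mem_erase hμ),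
      Finset.sum_sub_distrib, Finset.sum_const, nsmul_eq_mul, card_univ_erase_zero]
  have hk' : k = b * t - ∑ μ ∈ Finset.univ.erase (0 : Fin r), c μ := by
    have hm' : (m : ℤ) ≠ 0 := by exact_mod_cast hm.ne'
    apply mul_left_cancel₀ hm'
    rw [hsum, hk] at hlev
    linear_combination hlev - t * hab
  rw [← hk']
  funext μ
  by_cases hμ : μ = 0
  · subst hμ
    simpa [levelPoint] using hk
  · simpa [levelPoint, hμ] using hvμ μ hμ

lemma levelPoint_residue {m r : ℕ} [NeZero r] {a t : ℤ} {s c : Fin r → ℤ}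
    (hc : ∀ μ, 0 ≤ a * t + m * c μ + s μ ∧ a * t + m * c μ + s μ < m) (k : ℤ) (μ : Fin r)
    (hμ : μ ≠ 0) :
    0 ≤ levelPoint m a t k c 0 + (m : ℤ) * levelPoint m a t k c μ + s μ ∧
      levelPoint m a t k c 0 + (m : ℤ) * levelPoint m a t k c μ + s μ < (m : ℤ) := by
  have h := hc μ
  simp only [levelPoint, hμ, if_true, if_false]
  constructor <;> linarith

lemma levelPoint_level {m r : ℕ} [NeZero r] {a b : ℤ}
    (hab : a * (r : ℤ) + b * (m : ℤ) = 1) (c : Fin r → ℤ) (t : ℤ) {k : ℤ}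
    (hk : k = b * t - ∑ μ ∈ Finset.univ.erase (0 : Fin r), c μ) :
    (r : ℤ) * levelPoint m a t k c 0
      + (m : ℤ) * ∑ μ ∈ Finset.univ.erase (0 : Fin r), levelPoint m a t k c μ = t := by
  have hsum : ∑ μ ∈ Finset.univ.erase (0 : Fin r), levelPoint m a t k c μ
      = ∑ μ ∈ Finset.univ.erase (0 : Fin r), (c μ - k) :=
    Finset.sum_congr rfl fun μ hμ => by simp [levelPoint, Finset.ne_of_mem_erase hμ]
  rw [hsum, Finset.sum_sub_distrib, Finset.sum_const, nsmul_eq_mul, card_univ_erase_zero]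
  simp only [levelPoint, if_true]
  linear_combination t * hab + m * hk

theorem omega_card_succ_t (m r : ℕ) [NeZero r] (hm : 0 < m) (hr : 2 ≤ r)
    (hgcd : Nat.gcd r m = 1) (a b : ℤ) (hab : a * (r : ℤ) + b * (m : ℤ) = 1)
    (s : Fin r → ℤ) (t : ℤ) :
    (Omega m r s t).ncard = (Omega m r s (t - 1)).ncard + 1 ↔
      (m : ℤ) * ∑ μ ∈ Finset.univ.erase (0 : Fin r), ⌈((-a * t - s μ : ℤ) : ℚ) / (m : ℚ)⌉
        ≤ s 0 + (a + b * (m : ℤ)) * t := by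
  have hc : ∀ μ, 0 ≤ a * t + m * ⌈((-a * t - s μ : ℤ) : ℚ) / (m : ℚ)⌉ + s μ ∧
      a * t + m * ⌈((-a * t - s μ : ℤ) : ℚ) / (m : ℚ)⌉ + s μ < m := by
    intro μ
    rw [neg_mul]
    exact ceil_residue_bounds hm (a * t) (s μ)
  generalize hcdef : (fun μ => ⌈((-a * t - s μ : ℤ) : ℚ) / (m : ℚ)⌉) = c
  have hcμ : ∀ μ, ⌈((-a * t - s μ : ℤ) : ℚ) / (m : ℚ)⌉ = c μ := fun μ => congrFun hcdef μ
  simp only [hcμ] at hc ⊢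
  obtain ⟨k, hk⟩ : ∃ k, k = b * t - ∑ μ ∈ Finset.univ.erase (0 : Fin r), c μ := ⟨_, rfl⟩
  have hlev := levelPoint_level hab c t hk
  have hnot : levelPoint m a t k c ∉ Omega m r s (t - 1) := by
    rintro ⟨-, -, h⟩
    omega
  have hiff : levelPoint m a t k c ∈ Omega m r s t ↔
      (m : ℤ) * ∑ μ ∈ Finset.univ.erase (0 : Fin r), c μ ≤ s 0 + (a + b * (m : ℤ)) * t := by
    have h0 : levelPoint m a t k c 0 + s 0 = s 0 + (a + b * (m : ℤ)) * t
        - (m : ℤ) * ∑ μ ∈ Finset.univ.erase (0 : Fin r), c μ := by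
      simp only [levelPoint, if_true]
      linear_combination m * hk
    rw [← sub_nonneg, ← h0]
    exact ⟨fun h => h.1, fun h => ⟨h, levelPoint_residue hc k, hlev.le⟩⟩
  have hsub : Omega m r s (t - 1) ⊆ Omega m r s t :=
    fun v ⟨h0, h1, h2⟩ => ⟨h0, h1, by omega⟩
  have hcov : Omega m r s t ⊆ insert (levelPoint m a t k c) (Omega m r s (t - 1)) := by
    rintro v ⟨h0, h1, h2⟩
    rcases h2.eq_or_lt with h | h
    · left
      rw [hk]
      exact eq_levelPoint hm hab hc h1 h
    · exact Or.inr ⟨h0, h1, by omega⟩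
  rw [← hiff]
  -- The sets `Omega m r s (t - 1)` and `Omega m r s t` differ at most by `levelPoint m a t k c`.
  constructor
  · intro hcard
    by_contra hmem
    have : Omega m r s t = Omega m r s (t - 1) :=
      ((Set.subset_insert_iff_of_notMem hmem).1 hcov).antisymm hsub
    rw [this] at hcard
    omega
  · intro hmem
    rw [hcov.antisymm (Set.insert_subset hmem hsub),
      Set.ncard_insert_of_notMem hnot (Omega_finite m r s (t - 1))]
end

section
/- Let m and r be positive integers with gcd(r, m) = 1, and let a and b be integers with a·r + b·m = 1. Then the set of nonnegative integers t satisfying t − (r−1)·a·t − m·(r−1)·⌈−a·t/m⌉ ≥ 0 is equal to the set { m·k + r·j : j, k ∈ ℤ, 0 ≤ j ≤ m−1, k ≥ 0 }. -/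
/-!
Write `a * t = m * q + s` with `0 ≤ s < m`. The ceiling is then `-q`, so the defining
expression of the left-hand set is `t - (r - 1) * s`. From `a * r + b * m = 1` one gets
`t = m * k + r * s` with `k = b * t + r * q`, so that expression equals `m * k + s`, which is
nonnegative exactly when `k ≥ 0`. Conversely, if `t = m * k + r * j` with `0 ≤ j < m`, then `j`
is the remainder `s` of `a * t` modulo `m`.
-/

lemma ceil_neg_div_of_eq (m : ℕ) (hm : 0 < m) (n q s : ℤ) (h : n = m * q + s)
    (hs : 0 ≤ s) (hsm : s < m) : ⌈((-n : ℤ) : ℚ) / (m : ℚ)⌉ = -q := by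
  have hm' : (0 : ℚ) < m := by exact_mod_cast hm
  rw [Int.ceil_eq_iff, lt_div_iff₀ hm', div_le_iff₀ hm']
  have h1 : (s : ℚ) < m := by exact_mod_cast hsm
  have h2 : (0 : ℚ) ≤ s := by exact_mod_cast hs
  subst h
  push_cast
  constructor <;> linarith

theorem semigroup_at_infinity (m r : ℕ) (hm : 0 < m) (hr : 0 < r)
    (hgcd : Nat.gcd r m = 1) (a b : ℤ) (hab : a * (r : ℤ) + b * (m : ℤ) = 1) :
    {t : ℤ | 0 ≤ t ∧
        0 ≤ t - ((r : ℤ) - 1) * a * t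
            - (m : ℤ) * ((r : ℤ) - 1) * ⌈((-a * t : ℤ) : ℚ) / (m : ℚ)⌉} =
      {x : ℤ | ∃ j k : ℤ, 0 ≤ j ∧ j ≤ (m : ℤ) - 1 ∧ 0 ≤ k ∧
        x = (m : ℤ) * k + (r : ℤ) * j} := by
  have hm' : (0 : ℤ) < m := by exact_mod_cast hm
  ext t
  simp only [Set.mem_setOf_eq, neg_mul]
  constructor
  · rintro ⟨-, h⟩
    have hdiv : a * t = m * (a * t / m) + a * t % m := (Int.mul_ediv_add_emod _ _).symm
    have hs := Int.emod_nonneg (a * t) hm'.ne'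
    have hsm := Int.emod_lt_of_pos (a * t) hm'
    generalize a * t / m = q at *
    generalize a * t % m = s at *
    rw [ceil_neg_div_of_eq m hm _ q s hdiv hs hsm] at h
    have ht : t = m * (b * t + r * q) + r * s := by
      linear_combination (-t) * hab + (r : ℤ) * hdiv
    refine ⟨s, b * t + r * q, hs, by omega, ?_, ht⟩
    have h' : 0 ≤ m * (b * t + r * q) + s := by
      have e : t - ((r : ℤ) - 1) * a * t - m * (r - 1) * -q = m * (b * t + r * q) + s := by
        linear_combination ht - ((r : ℤ) - 1) * hdiv
      rwa [e] at h
    by_contra! hk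
    nlinarith
  · rintro ⟨j, k, hj, hjm, hk, rfl⟩
    refine ⟨by positivity, ?_⟩
    have hdiv : a * (m * k + r * j) = m * (a * k - b * j) + j := by
      linear_combination j * hab
    rw [ceil_neg_div_of_eq m hm _ _ j hdiv hj (by omega)]
    have e : (m * k + r * j : ℤ) - (r - 1) * a * (m * k + r * j)
        - m * (r - 1) * -(a * k - b * j) = m * k + j := by
      linear_combination (-((r : ℤ) - 1)) * hdiv
    rw [e]
    positivity
end

section
/- Let m and r be positive integers with gcd(r, m) = 1. Then the set of positive integers α satisfying −r·α + m·(r−1)·⌈α/m⌉ > 0 is equal to the set { m·k + j : j, k ∈ ℤ, 1 ≤ j ≤ m − 1 − ⌊m/r⌋, 0 ≤ k ≤ r − 2 − ⌊r·j/m⌋ }. -/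
/-! Write a positive integer `α` as `m * k + j` with `1 ≤ j ≤ m` and `0 ≤ k`. Then
`⌈α / m⌉ = k + 1`, and the gap inequality becomes `r * j < m * (r - 1 - k)`, which says exactly
`k ≤ r - 2 - ⌊r * j / m⌋`. Since `0 ≤ k`, it also forces `m < r * (m - j)`, i.e.
`j ≤ m - 1 - ⌊m / r⌋`, so the bound on `j` in the right-hand set costs nothing. -/

/-- An upper bound involving `⌊a / n⌋` is equivalent to the division-free strict
inequality obtained by integrality of `b` and `c`. -/
lemma le_sub_floor_div_iff (n : ℕ) (hn : 0 < n) (a b c : ℤ) :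
    b ≤ c - ⌊(a : ℚ) / (n : ℚ)⌋ ↔ a < n * (c - b + 1) := by
  have hn' : (0 : ℚ) < n := by exact_mod_cast hn
  have h : ⌊(a : ℚ) / (n : ℚ)⌋ < c - b + 1 ↔ a < n * (c - b + 1) := by
    rw [Int.floor_lt, div_lt_iff₀ hn', mul_comm]
    exact_mod_cast Iff.rfl
  rw [← h]
  omega

lemma ceil_div_of_remainder (m : ℕ) (hm : 0 < m) (j k : ℤ) (h1 : 1 ≤ j) (h2 : j ≤ m) :
    ⌈((m * k + j : ℤ) : ℚ) / (m : ℚ)⌉ = k + 1 := by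
  have hm' : (0 : ℚ) < m := by exact_mod_cast hm
  have h1' : (1 : ℚ) ≤ j := by exact_mod_cast h1
  have h2' : (j : ℚ) ≤ m := by exact_mod_cast h2
  rw [Int.ceil_eq_iff, lt_div_iff₀ hm', div_le_iff₀ hm']
  push_cast
  constructor <;> linarith

theorem gap_set_at_P1 (m r : ℕ) (hm : 0 < m) (hr : 0 < r) (hgcd : Nat.gcd r m = 1) :
    {α : ℤ | 0 < α ∧ 0 < -(r : ℤ) * α + (m : ℤ) * ((r : ℤ) - 1) * ⌈(α : ℚ) / (m : ℚ)⌉} =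
      {x : ℤ | ∃ j k : ℤ,
        1 ≤ j ∧ j ≤ (m : ℤ) - 1 - ⌊(m : ℚ) / (r : ℚ)⌋ ∧
        0 ≤ k ∧ k ≤ (r : ℤ) - 2 - ⌊(((r : ℤ) * j : ℤ) : ℚ) / (m : ℚ)⌋ ∧
        x = (m : ℤ) * k + j} := by
  have hm' : (0 : ℤ) < m := by exact_mod_cast hm
  have hr' : (0 : ℤ) < r := by exact_mod_cast hr
  have hj (j : ℤ) : j ≤ (m : ℤ) - 1 - ⌊(m : ℚ) / (r : ℚ)⌋ ↔ (m : ℤ) < r * (m - 1 - j + 1) := by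
    simpa using le_sub_floor_div_iff r hr m j (m - 1)
  ext α
  simp only [Set.mem_setOf_eq, hj, le_sub_floor_div_iff m hm]
  constructor
  · rintro ⟨hα, h⟩
    -- Shifting by one puts the remainder in `[1, m]` instead of `[0, m - 1]`.
    obtain ⟨j, k, h1, h2, h3, rfl⟩ : ∃ j k : ℤ, 1 ≤ j ∧ j ≤ m ∧ 0 ≤ k ∧ α = m * k + j := by
      refine ⟨(α - 1) % m + 1, (α - 1) / m, ?_, ?_, ?_, ?_⟩
      · have := Int.emod_nonneg (α - 1) hm'.ne'
        omega
      · have := Int.emod_lt_of_pos (α - 1) hm'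
        omega
      · exact Int.ediv_nonneg (by omega) hm'.le
      · have := Int.mul_ediv_add_emod (α - 1) m
        omega
    rw [ceil_div_of_remainder m hm j k h1 h2] at h
    have hmk : 0 ≤ (m : ℤ) * k := mul_nonneg hm'.le h3
    exact ⟨j, k, h1, by linarith, h3, by linarith, rfl⟩
  · rintro ⟨j, k, h1, h2, h3, h4, rfl⟩
    have hmk : 0 ≤ (m : ℤ) * k := mul_nonneg hm'.le h3
    have hjm : j ≤ m := by
      have : 0 < (m : ℤ) - 1 - j + 1 := pos_of_mul_pos_right (hm'.trans h2) hr'.le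
      omega
    rw [ceil_div_of_remainder m hm j k h1 hjm]
    exact ⟨by omega, by linarith⟩
end

section
/- Let m and r be positive integers with gcd(r, m) = 1, and let a and b be integers with a·r + b·m = 1. Then the set of positive integers t satisfying t − (r−1)·a·t − m·(r−1)·⌈−a·t/m⌉ < 0 is equal to the set { m·k − r·j : j, k ∈ ℤ, 1 ≤ j ≤ m − 1 − ⌊m/r⌋, ⌈r·j/m⌉ ≤ k ≤ r − 1 }. -/
/-!
For `t > 0` put `c = ⌈-a t / m⌉` and `i = a t + m c`, the residue of `a t` modulo `m` in `[0, m)`.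
The defining inequality reads `t < (r - 1) i`. By Bézout, `t = r i - m s` with `s = r c - b t`, so
the inequality becomes `i < m s`, i.e. `1 ≤ s`. The substitution `j = m - i`, `k = r - s` turns
`r i - m s` into `m k - r j` and `1 ≤ s` into `k ≤ r - 1`; positivity of `t` gives the lower bound
on `k` and, with `k ≤ r - 1`, the upper bound on `j`.
-/

theorem gap_set_at_infinity (m r : ℕ) (hm : 0 < m) (hr : 0 < r)
    (hgcd : Nat.gcd r m = 1) (a b : ℤ) (hab : a * (r : ℤ) + b * (m : ℤ) = 1) :
    {t : ℤ | 0 < t ∧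
        t - ((r : ℤ) - 1) * a * t
            - (m : ℤ) * ((r : ℤ) - 1) * ⌈((-a * t : ℤ) : ℚ) / (m : ℚ)⌉ < 0} =
      {x : ℤ | ∃ j k : ℤ,
        1 ≤ j ∧ j ≤ (m : ℤ) - 1 - ⌊(m : ℚ) / (r : ℚ)⌋ ∧
        ⌈(((r : ℤ) * j : ℤ) : ℚ) / (m : ℚ)⌉ ≤ k ∧ k ≤ (r : ℤ) - 1 ∧
        x = (m : ℤ) * k - (r : ℤ) * j} := by
  have hmQ : (0 : ℚ) < m := by exact_mod_cast hm
  have hrQ : (0 : ℚ) < r := by exact_mod_cast hr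
  have hmZ : (0 : ℤ) < m := by exact_mod_cast hm
  have hrZ : (0 : ℤ) < r := by exact_mod_cast hr
  have hceil : ∀ x k : ℤ, ⌈(x : ℚ) / (m : ℚ)⌉ ≤ k ↔ x ≤ m * k := by
    intro x k
    rw [Int.ceil_le, div_le_iff₀ hmQ, mul_comm]
    exact_mod_cast Iff.rfl
  have hfloor : ∀ n : ℤ, ⌊(m : ℚ) / (r : ℚ)⌋ < n ↔ (m : ℤ) < n * r := by
    intro n
    rw [Int.floor_lt, div_lt_iff₀ hrQ]
    exact_mod_cast Iff.rfl
  have hfloor0 : 0 ≤ ⌊(m : ℚ) / (r : ℚ)⌋ := Int.floor_nonneg.2 (by positivity)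
  ext t
  simp only [Set.mem_setOf_eq, hceil]
  have h1 := (hceil (-a * t) _).1 le_rfl
  have h2 := mt (hceil (-a * t) (⌈((-a * t : ℤ) : ℚ) / (m : ℚ)⌉ - 1)).2 (by omega)
  generalize ⌈((-a * t : ℤ) : ℚ) / (m : ℚ)⌉ = c at *
  rw [not_le] at h2
  constructor
  · rintro ⟨ht, h⟩
    have key : t = r * (a * t + m * c) - m * (r * c - b * t) := by
      linear_combination (-t) * hab
    have hs : 0 < r * c - b * t := by
      have : 0 < (m : ℤ) * (r * c - b * t) := by linarith
      exact pos_of_mul_pos_right this hmZ.le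
    have hk : (m : ℤ) * 1 ≤ m * (r * c - b * t) := mul_le_mul_of_nonneg_left hs hmZ.le
    refine ⟨m - (a * t + m * c), r - (r * c - b * t), by linarith, ?_, by linarith, by linarith,
      by linarith⟩
    have := (hfloor (a * t + m * c)).2 (by linarith)
    omega
  · rintro ⟨j, k, hj, hj', hk, hk', rfl⟩
    have hjm : j < m := by omega
    have hne : (m : ℤ) * k - r * j ≠ 0 := by
      intro h0
      have hd : (m : ℤ) ∣ j := ⟨a * k + b * j, by linear_combination (-j) * hab - a * h0⟩
      exact absurd (Int.le_of_dvd (by omega) hd) (by omega)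
    have hpos : 0 < (m : ℤ) * k - r * j := lt_of_le_of_ne (by linarith) hne.symm
    -- `a t + m c ≡ -j` modulo `m`, and both this residue and `m - j` lie in `[0, m)`.
    have e : a * (m * k - r * j) + m * c = -j + m * (a * k + b * j + c) := by
      linear_combination (-j) * hab
    have hl : 0 < a * k + b * j + c := by
      have : 0 < (m : ℤ) * (a * k + b * j + c) := by linarith
      exact pos_of_mul_pos_right this hmZ.le
    have hu : a * k + b * j + c < 2 := by
      have : (m : ℤ) * (a * k + b * j + c) < m * 2 := by linarith
      exact lt_of_mul_lt_mul_left this hmZ.le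
    have h1' : a * k + b * j + c = 1 := by omega
    rw [h1'] at e
    have e' : (m * k - r * j : ℤ) - (r - 1) * a * (m * k - r * j) - m * (r - 1) * c
        = m * (k - (r - 1)) - j := by
      linear_combination (-((r : ℤ) - 1)) * e
    refine ⟨hpos, ?_⟩
    rw [e']
    have : (m : ℤ) * (k - (r - 1)) ≤ 0 := mul_nonpos_of_nonneg_of_nonpos hmZ.le (by linarith)
    linarith
end
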